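/- For any pseudo-Anosov braid x ∈ B_n there exist a conjugate y of x and an integer M with 1 ≤ M ≤ D³, where D = n(n−1)/2, such that y^M is weakly cyclically weighted. -/

import Mathlib

/-! Basic definitions for the braid group `B_n`, its Garside structure,
and related notions, following Garside/El-Rifai–Morton.
Generators are indexed by `i : Fin (n-1)`, with `σ i` corresponding to the
Artin generator `σ_{i+1}` (1-based) of the paper. -/

/-- The braid relations, as a set of elements of the free group. -/
def braidRels (n : ℕ) : Set (FreeGroup (Fin (n - 1))) :=
  { r | (∃ i j : Fin (n - 1), (i : ℕ) + 1 < (j : ℕ) ∧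
          r = .of i * .of j * (.of i)⁻¹ * (.of j)⁻¹) ∨
        (∃ i j : Fin (n - 1), (i : ℕ) + 1 = (j : ℕ) ∧
          r = (.of i * .of j * .of i) * (.of j * .of i * .of j)⁻¹) }

/-- The braid group on `n` strands. -/
abbrev BraidGroup (n : ℕ) := PresentedGroup (braidRels n)

namespace BraidGroup

variable {n : ℕ}

/-- The Artin generator `σ_{i+1}` (`i` is a 0-based index). -/
def σ (i : Fin (n - 1)) : BraidGroup n := PresentedGroup.of i

/-- `σ'` with a natural-number 0-based index (junk value `1` out of range). -/
def σ' (n : ℕ) (i : ℕ) : BraidGroup n := if h : i < n - 1 then σ ⟨i, h⟩ else 1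

/-- The fundamental braid `Δ = (σ_1⋯σ_{n-1})(σ_1⋯σ_{n-2})⋯(σ_1σ_2)σ_1`. -/
def Δ (n : ℕ) : BraidGroup n :=
  (((List.range (n - 1)).reverse).map
    (fun j => ((List.range (j + 1)).map (σ' n)).prod)).prod

/-- The monoid of positive braids inside `B_n` (the image of `B_n^+`). -/
def positives (n : ℕ) : Submonoid (BraidGroup n) :=
  Submonoid.closure (Set.range (σ (n := n)))

/-- `x` is a positive braid. -/
def IsPositive (x : BraidGroup n) : Prop := x ∈ positives n

/-- The prefix (left-divisibility) order: `x ≼ y` iff `x⁻¹y` is positive. -/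
def LeftDvd (x y : BraidGroup n) : Prop := ∃ p, IsPositive p ∧ x * p = y

/-- The right-divisibility order: `x ≼_R y` iff `y x⁻¹` is positive. -/
def RightDvd (x y : BraidGroup n) : Prop := ∃ p, IsPositive p ∧ p * x = y

/-- Permutation braids: positive left divisors of `Δ`. -/
def IsPermBraid (x : BraidGroup n) : Prop := IsPositive x ∧ LeftDvd x (Δ n)

/-- The involution `τ` of `B_n`, determined by `τ(σ_i) = σ_{n-i}`
(on 0-based indices: `i ↦ (n-2) - i`, i.e. `Fin.rev`). -/
noncomputable def τ (n : ℕ) : BraidGroup n →* BraidGroup n :=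
  Classical.epsilon (fun f => ∀ i : Fin (n - 1), f (σ i) = σ i.rev)

/-- `τ^u` for an integer `u`: equals `τ` for odd `u` and the identity for even `u`
(`τ` is an involution). -/
noncomputable def τpow (u : ℤ) (x : BraidGroup n) : BraidGroup n :=
  if Even u then x else τ n x

/-- The product `a⬝b` of a permutation braid `a` and a positive braid `b` is left
weighted iff `a* ∧ b = e`, i.e. no generator left-divides both `a* = a⁻¹Δ` and `b`. -/
def IsLeftWeighted (a b : BraidGroup n) : Prop :=
  ∀ i : Fin (n - 1), ¬ (LeftDvd (σ i) (a⁻¹ * Δ n) ∧ LeftDvd (σ i) b)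

/-- `Δ^u x_1 ⋯ x_k` is the left weighted form of `x`, where `L = [x_1, …, x_k]`. -/
def IsWeightedForm (u : ℤ) (L : List (BraidGroup n)) (x : BraidGroup n) : Prop :=
  (∀ a ∈ L, IsPermBraid a ∧ a ≠ 1 ∧ a ≠ Δ n) ∧
  L.Chain' IsLeftWeighted ∧
  x = (Δ n) ^ u * L.prod

/-- The left weighted form of a braid (chosen by choice; it exists and is unique). -/
noncomputable def wf (x : BraidGroup n) : ℤ × List (BraidGroup n) :=
  Classical.epsilon (fun p => IsWeightedForm p.1 p.2 x)

/-- The infimum `inf(x)`. -/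
noncomputable def binf (x : BraidGroup n) : ℤ := (wf x).1

/-- The canonical length `ℓ(x)`. -/
noncomputable def blen (x : BraidGroup n) : ℕ := (wf x).2.length

/-- The supremum `sup(x) = inf(x) + ℓ(x)`. -/
noncomputable def bsup (x : BraidGroup n) : ℤ := binf x + blen x

/-- The head `H(x)`: the first factor of the weighted form. -/
noncomputable def bhead (x : BraidGroup n) : BraidGroup n := ((wf x).2.head?).getD 1

/-- The tail `T(x)`: the last factor of the weighted form. -/
noncomputable def btail (x : BraidGroup n) : BraidGroup n := ((wf x).2.getLast?).getD 1

/-- Cycling: `c(x) = τ^u(H(x))⁻¹ · x · τ^u(H(x))`. -/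
noncomputable def cyc (x : BraidGroup n) : BraidGroup n :=
  (τpow (binf x) (bhead x))⁻¹ * x * τpow (binf x) (bhead x)

/-- Decycling: `d(x) = T(x) · x · T(x)⁻¹`. -/
noncomputable def decyc (x : BraidGroup n) : BraidGroup n :=
  btail x * x * (btail x)⁻¹

/-- `x` is cyclically weighted: `x_k ⬝ τ^u(x_1)` is left weighted. -/
noncomputable def IsCW (x : BraidGroup n) : Prop :=
  IsLeftWeighted (btail x) (τpow (binf x) (bhead x))

/-- `x` is weakly cyclically weighted: `H(x·τ^u(H(x))) = H(x)`. -/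
noncomputable def IsWCW (x : BraidGroup n) : Prop :=
  bhead (x * τpow (binf x) (bhead x)) = bhead x

/-- The summit set of `x`: conjugates with maximal infimum. -/
def SS (x : BraidGroup n) : Set (BraidGroup n) :=
  { y | IsConj x y ∧ ∀ z, IsConj x z → binf z ≤ binf y }

/-- The super summit set of `x`: conjugates with maximal infimum and minimal supremum. -/
def SSS (x : BraidGroup n) : Set (BraidGroup n) :=
  { y | y ∈ SS x ∧ ∀ z, IsConj x z → bsup y ≤ bsup z }

/-- The ultra summit set of `x`. -/
def USS (x : BraidGroup n) : Set (BraidGroup n) :=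
  { y ∈ SSS x | ∃ M : ℕ, 0 < M ∧ cyc^[M] y = y }

/-- The reduced super summit set of `x`. -/
def RSSS (x : BraidGroup n) : Set (BraidGroup n) :=
  { y | IsConj x y ∧ (∃ M : ℕ, 0 < M ∧ cyc^[M] y = y) ∧
        (∃ N : ℕ, 0 < N ∧ decyc^[N] y = y) }

/-- The left meet (greatest common left divisor) of two braids. -/
noncomputable def leftMeet (a b : BraidGroup n) : BraidGroup n :=
  Classical.epsilon (fun m => IsPositive m ∧ LeftDvd m a ∧ LeftDvd m b ∧
    ∀ c, IsPositive c → LeftDvd c a → LeftDvd c b → LeftDvd c m)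

/-- `x` is periodic: some positive power of `x` is a power of `Δ²`. -/
def IsPeriodic (x : BraidGroup n) : Prop :=
  ∃ m : ℕ, 0 < m ∧ ∃ k : ℤ, x ^ m = (Δ n) ^ (2 * k)

/-- The free generator `x_{i+1}` of `π₁` of the `n`-punctured disk (0-based index;
junk value `1` out of range). -/
def freeGen (n : ℕ) (i : ℕ) : FreeGroup (Fin n) := if h : i < n then .of ⟨i, h⟩ else 1

/-- The Artin action of `B_n` on the free group `F_n`:
`σ_i` sends `x_i ↦ x_i x_{i+1} x_i⁻¹`, `x_{i+1} ↦ x_i`, fixing the other generators. -/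
noncomputable def artin (n : ℕ) : BraidGroup n →* Monoid.End (FreeGroup (Fin n)) :=
  Classical.epsilon (fun f => ∀ i : Fin (n - 1),
    f (σ i) = FreeGroup.lift (fun j : Fin n =>
      if (j : ℕ) = (i : ℕ) then freeGen n i * freeGen n (i + 1) * (freeGen n i)⁻¹
      else if (j : ℕ) = (i : ℕ) + 1 then freeGen n i
      else FreeGroup.of j))

/-- The element of `π₁` represented by the round curve enclosing punctures
`I.1 + 1, …, I.2` (1-based): the product `x_{I.1+1} ⋯ x_{I.2}`. -/
def curveWord (n : ℕ) (I : ℕ × ℕ) : FreeGroup (Fin n) :=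
  ((List.range (I.2 - I.1)).map (fun t => freeGen n (I.1 + t))).prod

/-- An essential round curve: it encloses at least `2` and at most `n-1` punctures. -/
def EssentialCurve (n : ℕ) (I : ℕ × ℕ) : Prop :=
  I.1 + 2 ≤ I.2 ∧ I.2 ≤ n ∧ I.2 - I.1 ≤ n - 1

/-- Two round curves are disjoint (as curves): the intervals are disjoint or nested. -/
def CurvesCompatible (I J : ℕ × ℕ) : Prop :=
  I.2 ≤ J.1 ∨ J.2 ≤ I.1 ∨ (I.1 ≤ J.1 ∧ J.2 ≤ I.2) ∨ (J.1 ≤ I.1 ∧ I.2 ≤ J.2)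

/-- `x` is reducible: some conjugate of `x` preserves, up to conjugacy in `π₁`
(i.e. up to isotopy) and orientation, a nonempty system of disjoint essential
round curves. -/
noncomputable def IsReducible (x : BraidGroup n) : Prop :=
  ∃ y, IsConj x y ∧ ∃ F : Finset (ℕ × ℕ), F.Nonempty ∧
    (∀ I ∈ F, EssentialCurve n I) ∧
    (∀ I ∈ F, ∀ J ∈ F, I ≠ J → CurvesCompatible I J) ∧
    (∀ I ∈ F, ∃ J ∈ F, ∃ g : FreeGroup (Fin n),
      artin n y (curveWord n I) = g * curveWord n J * g⁻¹ ∨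
      artin n y (curveWord n I) = g * (curveWord n J)⁻¹ * g⁻¹)

/-- `x` is pseudo-Anosov: neither periodic nor reducible (Nielsen–Thurston). -/
noncomputable def IsPseudoAnosov (x : BraidGroup n) : Prop :=
  ¬ IsPeriodic x ∧ ¬ IsReducible x

/-- `σ_i` (1-based index `i`) left-divides the positive braid `w`, i.e. `i` is
 a descent of `w`. -/
def HasDescent (n : ℕ) (i : ℕ) (w : BraidGroup n) : Prop := LeftDvd (σ' n (i - 1)) w

/-- `D(n,k,i)`: the probability that a product of `k` independent uniformly random
permutation braids begins with the descent `i` (1-based), computed by counting. -/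
noncomputable def descentProb (n k : ℕ) (i : ℕ) : ℝ :=
  ({ f : Fin k → BraidGroup n | (∀ j, IsPermBraid (f j)) ∧
      HasDescent n i (List.ofFn f).prod }.ncard : ℝ) / (n.factorial ^ k : ℝ)

/-- `D(n,k)`: the expected number of descents of a product of `k` random
permutation braids. -/
noncomputable def descentExp (n k : ℕ) : ℝ :=
  ∑ i ∈ Finset.Icc 1 (n - 1), descentProb n k i

/-- `d(n,k) = D(n,k) - D(n,k-1)`: the expected number of descents contributed by
the `k`-th factor. -/
noncomputable def descentInc (n k : ℕ) : ℝ := descentExp n k - descentExp n (k - 1)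

end BraidGroup

/-! Garside's key lemma makes the positive braid monoid cancellative with conditional least common
multiples, and inverting the central element `Δ²` embeds it in `B_n`. So, under left divisibility,
`B_n` is a left-invariant meet-semilattice with the exponent sum as a strictly monotone length.

`Δ^p ≤ c⁻¹ z c` holds exactly when `c` lies below its image under the order automorphism
`c ↦ z c Δ^(-p)`. If `c` lies below its image under the `(D + 1)`-st iterate up to a factor of
length at most `D`, then some element lies below its own image. Hence the summit infimum `F(k)` of
`x^k` satisfies `F(k) ≤ k t < F(k) + 1 - 1 / (D + 1)`, where `t` is the limit of `F(k) / k`.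
Choosing `k ≤ D` with `k t` within `1 / (D + 1)` of an integer (Dirichlet) gives a conjugate `y` of
`x` with `inf (y^(k M)) = M inf (y^k)` for all `1 ≤ M ≤ D`.

For `z = y^k` and `u = inf z`, the increasing sequence `Δ ⊓ z^M Δ^(-M u)` has to repeat within `D`
steps since `Δ` has length `D`, and it is constant from then on; this says that `z^M` is weakly
cyclically weighted, with exponent `k M ≤ D²` over `y`. -/

section MonoidIdentities

variable {M : Type*} [Monoid M] {a b c : M}

theorem mul_braid_right (hac : a * c = c * a) (hab : a * b * a = b * a * b)
    (hcb : c * b * c = b * c * b) : c * (b * (a * (c * b))) = b * (a * (c * (b * a))) := by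
  simp only [← mul_assoc]
  calc c * b * a * c * b = c * b * (a * c) * b := by simp only [mul_assoc]
    _ = (c * b * c) * a * b := by rw [hac]; simp only [mul_assoc]
    _ = b * c * (b * a * b) := by rw [hcb]; simp only [mul_assoc]
    _ = b * (c * a) * b * a := by rw [← hab]; simp only [mul_assoc]
    _ = b * a * c * b * a := by rw [← hac]; simp only [mul_assoc]

theorem mul_braid_left (hac : a * c = c * a) (hab : a * b * a = b * a * b)
    (hcb : c * b * c = b * c * b) : c * (b * (a * (b * c))) = a * (b * (c * (b * a))) := by
  simp only [← mul_assoc]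
  calc c * b * a * b * c = c * (b * a * b) * c := by simp only [mul_assoc]
    _ = (c * a) * b * (a * c) := by rw [← hab]; simp only [mul_assoc]
    _ = (a * c) * b * (c * a) := by rw [hac]
    _ = a * (c * b * c) * a := by simp only [mul_assoc]
    _ = a * b * c * b * a := by rw [hcb]; simp only [mul_assoc]

end MonoidIdentities

/-- The defining relations of the Artin monoid of a graph: adjacent generators braid, all other
pairs commute. -/
inductive ArtinRel {V : Type*} (Γ : SimpleGraph V) : FreeMonoid V → FreeMonoid V → Prop
  | braid {i j : V} (h : Γ.Adj i j) : ArtinRel Γ (.of i * .of j * .of i) (.of j * .of i * .of j)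
  | comm {i j : V} (h : ¬ Γ.Adj i j) : ArtinRel Γ (.of i * .of j) (.of j * .of i)

/-- The simply-laced Artin monoid with Coxeter graph `Γ`; for a path it is the positive braid
monoid. -/
abbrev ArtinMonoid {V : Type*} (Γ : SimpleGraph V) := PresentedMonoid (ArtinRel Γ)

namespace ArtinMonoid

variable {V : Type*} {Γ : SimpleGraph V} {i j k : V} {x y z : ArtinMonoid Γ}

/-- The generator of the Artin monoid attached to a vertex. -/
def gen (Γ : SimpleGraph V) (i : V) : ArtinMonoid Γ := PresentedMonoid.of _ i

/-- The element represented by a positive word. -/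
def mk (Γ : SimpleGraph V) : FreeMonoid V →* ArtinMonoid Γ := PresentedMonoid.mk _

@[simp] theorem mk_of (i : V) : mk Γ (.of i) = gen Γ i := rfl

theorem gen_braid (h : Γ.Adj i j) :
    gen Γ i * gen Γ j * gen Γ i = gen Γ j * gen Γ i * gen Γ j :=
  PresentedMonoid.mk_eq_mk_of_rel (.braid h)

theorem gen_comm (h : ¬ Γ.Adj i j) : gen Γ i * gen Γ j = gen Γ j * gen Γ i :=
  PresentedMonoid.mk_eq_mk_of_rel (.comm h)

theorem gen_braid_assoc (h : Γ.Adj i j) (x : ArtinMonoid Γ) :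
    gen Γ i * (gen Γ j * (gen Γ i * x)) = gen Γ j * (gen Γ i * (gen Γ j * x)) := by
  simpa only [mul_assoc] using congrArg (· * x) (gen_braid h)

theorem gen_comm_assoc (h : ¬ Γ.Adj i j) (x : ArtinMonoid Γ) :
    gen Γ i * (gen Γ j * x) = gen Γ j * (gen Γ i * x) := by
  simpa only [mul_assoc] using congrArg (· * x) (gen_comm h)

/-- The common length of the words representing an element. -/
def length (x : ArtinMonoid Γ) : ℕ :=
  (PresentedMonoid.lift (fun _ => .ofAdd 1) (by rintro _ _ (h | h) <;> simp) :
    ArtinMonoid Γ →* Multiplicative ℕ) x |>.toAdd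

@[simp] theorem length_one : length (1 : ArtinMonoid Γ) = 0 := by simp [length]

@[simp] theorem length_mul (x y : ArtinMonoid Γ) : length (x * y) = length x + length y := by
  simp [length]

@[simp] theorem length_gen (i : V) : length (gen Γ i) = 1 := rfl

theorem induction_gen_mul {p : ArtinMonoid Γ → Prop} (one : p 1)
    (gen_mul : ∀ i x, p x → p (gen Γ i * x)) (x : ArtinMonoid Γ) : p x := by
  induction x using PresentedMonoid.inductionOn with | _ w
  induction w using FreeMonoid.recOn with
  | one => exact one
  | of_mul i w hw => exact gen_mul i _ hw

theorem eq_one_or_exists_gen_mul (x : ArtinMonoid Γ) : x = 1 ∨ ∃ i y, x = gen Γ i * y := by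
  induction x using induction_gen_mul with
  | one => exact .inl rfl
  | gen_mul i y => exact .inr ⟨i, y, rfl⟩

theorem eq_one_of_length_eq_zero (h : length x = 0) : x = 1 := by
  obtain rfl | ⟨i, y, rfl⟩ := eq_one_or_exists_gen_mul x
  · rfl
  · simp at h

open Classical in
/-- The right complement `gen i \ gen j`: the element that completes `gen i` to the least common
multiple of `gen i` and `gen j`. -/
noncomputable def complement (Γ : SimpleGraph V) (i j : V) : ArtinMonoid Γ :=
  if i = j then 1 else if Γ.Adj i j then gen Γ j * gen Γ i else gen Γ j

@[simp] theorem complement_self (i : V) : complement Γ i i = 1 := if_pos rfl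

theorem complement_of_adj (h : Γ.Adj i j) : complement Γ i j = gen Γ j * gen Γ i := by
  rw [complement, if_neg h.ne, if_pos h]

theorem complement_of_not_adj (hne : i ≠ j) (h : ¬ Γ.Adj i j) : complement Γ i j = gen Γ j := by
  rw [complement, if_neg hne, if_neg h]

theorem gen_mul_complement (i j : V) :
    gen Γ i * complement Γ i j = gen Γ j * complement Γ j i := by
  obtain rfl | hne := eq_or_ne i j
  · rfl
  by_cases h : Γ.Adj i j
  · rw [complement_of_adj h, complement_of_adj h.symm, ← mul_assoc, gen_braid h, mul_assoc]
  · rw [complement_of_not_adj hne h, complement_of_not_adj hne.symm (mt .symm h), gen_comm h]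

theorem gen_mul_complement_of_not_adj (hi : ¬ Γ.Adj k i) (hj : ¬ Γ.Adj k j) :
    gen Γ k * complement Γ i j = complement Γ i j * gen Γ k := by
  unfold complement
  split_ifs
  · rw [mul_one, one_mul]
  · rw [mul_assoc, ← gen_comm hi, ← mul_assoc, gen_comm hj, mul_assoc]
  · exact gen_comm hj

/-- `gen i * x` and `gen j * y` are the same multiple of the least common multiple of `gen i` and
`gen j`. -/
def Completes (i j : V) (x y : ArtinMonoid Γ) : Prop :=
  ∃ w, x = complement Γ i j * w ∧ y = complement Γ j i * w

theorem Completes.symm : Completes i j x y → Completes j i y x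
  | ⟨w, hx, hy⟩ => ⟨w, hy, hx⟩

theorem Completes.mul_right : Completes i j x y → Completes i j (x * z) (y * z)
  | ⟨w, hx, hy⟩ => ⟨w * z, by rw [hx, mul_assoc], by rw [hy, mul_assoc]⟩

@[simp] theorem completes_self_iff : Completes i i x y ↔ x = y := by
  simp [Completes, eq_comm]

theorem completes_iff_of_adj (h : Γ.Adj i j) : Completes i j x y ↔
    ∃ w, x = gen Γ j * (gen Γ i * w) ∧ y = gen Γ i * (gen Γ j * w) := by
  simp only [Completes, complement_of_adj h, complement_of_adj h.symm, mul_assoc]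

theorem completes_iff_of_not_adj (hne : i ≠ j) (h : ¬ Γ.Adj i j) : Completes i j x y ↔
    ∃ w, x = gen Γ j * w ∧ y = gen Γ i * w := by
  simp only [Completes, complement_of_not_adj hne h,
    complement_of_not_adj hne.symm (mt .symm h)]

/-- Garside's key lemma for products of length at most `L`; the induction on `L` that proves it
is `gensCompleteBelow`. -/
def GensCompleteBelow (Γ : SimpleGraph V) (L : ℕ) : Prop :=
  ∀ ⦃i j : V⦄ ⦃x y : ArtinMonoid Γ⦄, length x < L → gen Γ i * x = gen Γ j * y → Completes i j x y

namespace GensCompleteBelow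

variable {L : ℕ} {u v w : ArtinMonoid Γ}

theorem trans_of_not_adj_of_not_adj (IH : GensCompleteBelow Γ L) (hL : length w ≤ L)
    (hik : i ≠ k) (hik' : ¬ Γ.Adj i k) (hkj : k ≠ j) (hkj' : ¬ Γ.Adj k j)
    (huw : Completes i k u w) (hwv : Completes k j w v) : Completes i j u v := by
  obtain ⟨p, rfl, rfl⟩ := (completes_iff_of_not_adj hik hik').1 huw
  obtain ⟨q, hq, rfl⟩ := (completes_iff_of_not_adj hkj hkj').1 hwv
  obtain ⟨z, rfl, rfl⟩ := IH (by simp at hL; omega) hq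
  have hki : ¬ Γ.Adj k i := mt .symm hik'
  exact ⟨gen Γ k * z,
    by rw [← mul_assoc, gen_mul_complement_of_not_adj hki hkj', mul_assoc],
    by rw [← mul_assoc, gen_mul_complement_of_not_adj hkj' hki, mul_assoc]⟩

theorem trans_of_not_adj_of_adj (IH : GensCompleteBelow Γ L) (hL : length w ≤ L)
    (hik : i ≠ k) (hik' : ¬ Γ.Adj i k) (hkj : Γ.Adj k j)
    (huw : Completes i k u w) (hwv : Completes k j w v) : Completes i j u v := by
  obtain ⟨p, rfl, rfl⟩ := (completes_iff_of_not_adj hik hik').1 huw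
  obtain ⟨q, hpq, rfl⟩ := (completes_iff_of_adj hkj).1 hwv
  have hij : i ≠ j := fun h => hik' (h ▸ hkj.symm)
  have hki : ¬ Γ.Adj k i := mt .symm hik'
  have hlen := congrArg length hpq
  simp only [length_mul, length_gen] at hL hlen
  have hp := IH (by omega) hpq
  by_cases hij' : Γ.Adj i j
  · obtain ⟨z, rfl, hz⟩ := (completes_iff_of_adj hij').1 hp
    simp only [length_mul, length_gen] at hL hlen
    obtain ⟨y, rfl, hy⟩ :=
      (completes_iff_of_not_adj hik.symm hki).1 (IH (by omega) hz)
    simp only [length_mul, length_gen] at hL hlen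
    obtain ⟨x, rfl, rfl⟩ := (completes_iff_of_adj hkj.symm).1 (IH (by omega) hy)
    refine (completes_iff_of_adj hij').2 ⟨gen Γ k * (gen Γ j * (gen Γ i * x)), ?_, ?_⟩
    · simpa only [mul_assoc] using congrArg (· * x)
        (mul_braid_right (gen_comm hik') (gen_braid hij') (gen_braid hkj))
    · simpa only [mul_assoc] using congrArg (· * x)
        (mul_braid_left (gen_comm hik') (gen_braid hij') (gen_braid hkj))
  · obtain ⟨z, rfl, hz⟩ := (completes_iff_of_not_adj hij hij').1 hp
    simp only [length_mul, length_gen] at hL hlen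
    obtain ⟨y, rfl, rfl⟩ :=
      (completes_iff_of_not_adj hik.symm hki).1 (IH (by omega) hz)
    refine (completes_iff_of_not_adj hij hij').2 ⟨gen Γ k * (gen Γ j * y), ?_, ?_⟩
    · exact gen_braid_assoc hkj y
    · rw [gen_comm_assoc (mt .symm hij'), gen_comm_assoc hki]

theorem trans_of_adj_of_adj (hΓ : Γ.CliqueFree 3) (IH : GensCompleteBelow Γ L)
    (hL : length w ≤ L) (hik : Γ.Adj i k) (hkj : Γ.Adj k j)
    (huw : Completes i k u w) (hwv : Completes k j w v) : Completes i j u v := by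
  classical
  obtain ⟨p, rfl, rfl⟩ := (completes_iff_of_adj hik).1 huw
  obtain ⟨q, hpq, rfl⟩ := (completes_iff_of_adj hkj).1 hwv
  have hlen := congrArg length hpq
  simp only [length_mul, length_gen] at hL hlen
  have hp := IH (by simp; omega) hpq
  obtain rfl | hij := eq_or_ne i j
  · rw [completes_self_iff] at hp ⊢
    rw [completes_self_iff.1 (IH (by omega) hp)]
  have hij' : ¬ Γ.Adj i j := fun h =>
    hΓ {i, k, j} (SimpleGraph.is3Clique_triple_iff.2 ⟨hik, h, hkj⟩)
  obtain ⟨z, hz, hz'⟩ := (completes_iff_of_not_adj hij hij').1 hp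
  obtain ⟨y, rfl, hy⟩ := (completes_iff_of_adj hkj).1 (IH (by omega) hz)
  obtain ⟨y', rfl, hy'⟩ := (completes_iff_of_adj hik.symm).1 (IH (by omega) hz')
  simp only [length_mul, length_gen] at hL hlen
  have hyy' := completes_self_iff.1 (IH (by simp; omega) (hy.symm.trans hy'))
  obtain ⟨x, rfl, rfl⟩ :=
    (completes_iff_of_not_adj hij.symm (mt .symm hij')).1 (IH (by omega) hyy')
  refine (completes_iff_of_not_adj hij hij').2
    ⟨gen Γ k * (gen Γ i * (gen Γ j * (gen Γ k * x))), ?_, ?_⟩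
  · simpa only [mul_assoc] using congrArg (· * x)
      (mul_braid_right (gen_comm hij') (gen_braid hik) (gen_braid hkj.symm)).symm
  · rw [gen_comm_assoc hij']
    simpa only [mul_assoc] using congrArg (· * x)
      (mul_braid_right (gen_comm hij').symm (gen_braid hkj.symm) (gen_braid hik)).symm

theorem trans (hΓ : Γ.CliqueFree 3) (IH : GensCompleteBelow Γ L) (hL : length w ≤ L)
    (huw : Completes i k u w) (hwv : Completes k j w v) : Completes i j u v := by
  obtain rfl | hik := eq_or_ne i k
  · rwa [completes_self_iff.1 huw]
  obtain rfl | hkj := eq_or_ne k j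
  · rwa [← completes_self_iff.1 hwv]
  by_cases hik' : Γ.Adj i k <;> by_cases hkj' : Γ.Adj k j
  · exact IH.trans_of_adj_of_adj hΓ hL hik' hkj' huw hwv
  · exact (IH.trans_of_not_adj_of_adj hL hkj.symm (mt .symm hkj') hik'.symm hwv.symm
      huw.symm).symm
  · exact IH.trans_of_not_adj_of_adj hL hik hik' hkj' huw hwv
  · exact IH.trans_of_not_adj_of_not_adj hL hik hik' hkj hkj' huw hwv

end GensCompleteBelow

theorem completes_of_artinRel {a b u v : FreeMonoid V} (h : ArtinRel Γ u v)
    (hu : u = .of i * a) (hv : v = .of j * b) :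
    Completes i j (PresentedMonoid.mk (ArtinRel Γ) a) (PresentedMonoid.mk _ b) := by
  cases h with
  | @braid i' j' h =>
    rw [mul_assoc] at hu hv
    obtain ⟨rfl, rfl⟩ := List.cons.inj hu
    obtain ⟨rfl, rfl⟩ := List.cons.inj hv
    exact (completes_iff_of_adj h).2 ⟨1, by rw [mul_one]; rfl, by rw [mul_one]; rfl⟩
  | @comm i' j' h =>
    obtain ⟨rfl, rfl⟩ := List.cons.inj hu
    obtain ⟨rfl, rfl⟩ := List.cons.inj hv
    obtain rfl | hne := eq_or_ne i' j'
    · exact completes_self_iff.2 rfl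
    · exact (completes_iff_of_not_adj hne h).2 ⟨1, by rw [mul_one]; rfl, by rw [mul_one]; rfl⟩

theorem GensCompleteBelow.completes_of_rel (hΓ : Γ.CliqueFree 3) {L : ℕ}
    (IH : GensCompleteBelow Γ L) {u v : FreeMonoid V} (h : ConGen.Rel (ArtinRel Γ) u v) :
    ∀ {i j a b}, u = .of i * a → v = .of j * b → length (mk Γ a) ≤ L →
      Completes i j (mk Γ a) (mk Γ b) := by
  have mk_eq {u v} (h : ConGen.Rel (ArtinRel Γ) u v) : mk Γ u = mk Γ v :=
    PresentedMonoid.mk_eq_mk_iff.2 h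
  induction h with
  | of u v h => exact fun hu hv _ => completes_of_artinRel h hu hv
  | refl u =>
    rintro i j a b rfl hv _
    obtain ⟨rfl, rfl⟩ := List.cons.inj hv
    exact completes_self_iff.2 rfl
  | symm h ih =>
    rintro i j a b rfl rfl hL
    have hlen := congrArg length (mk_eq h)
    simp only [map_mul, length_mul, mk_of, length_gen] at hlen
    exact (ih rfl rfl (by omega)).symm
  | @trans _ w _ h h' ih ih' =>
    rintro i j a b rfl rfl hL
    have hlen := congrArg length (mk_eq h)
    cases w using FreeMonoid.casesOn with
    | one => simp at hlen
    | of_mul k w =>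
      simp only [map_mul, length_mul, mk_of, length_gen] at hlen
      exact IH.trans hΓ (by omega) (ih rfl rfl hL) (ih' rfl rfl (by omega))
  | @mul u v u' v' h h' ih ih' =>
    intro i j a b hu hv hL
    have hlen := congrArg length (mk_eq h)
    cases u using FreeMonoid.casesOn <;> cases v using FreeMonoid.casesOn
    case one.one => exact ih' ((one_mul _).symm.trans hu) ((one_mul _).symm.trans hv) hL
    case one.of_mul => simp at hlen; omega
    case of_mul.one => simp at hlen
    case of_mul.of_mul =>
      rw [mul_assoc] at hu hv
      obtain ⟨rfl, rfl⟩ := List.cons.inj hu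
      obtain ⟨rfl, rfl⟩ := List.cons.inj hv
      change length (mk Γ (_ * u')) ≤ L at hL
      change Completes _ _ (mk Γ (_ * u')) (mk Γ (_ * v'))
      rw [map_mul, length_mul] at hL
      rw [map_mul, map_mul, ← mk_eq h']
      exact (ih rfl rfl (by omega)).mul_right

theorem gensCompleteBelow (hΓ : Γ.CliqueFree 3) (L : ℕ) : GensCompleteBelow Γ L := by
  induction L with
  | zero => exact fun _ _ _ _ h => absurd h (Nat.not_lt_zero _)
  | succ L IH =>
    intro i j x y hx h
    induction x using PresentedMonoid.inductionOn with | _ u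
    induction y using PresentedMonoid.inductionOn with | _ v
    exact IH.completes_of_rel hΓ (PresentedMonoid.mk_eq_mk_iff.1 h) rfl rfl (Nat.lt_succ_iff.1 hx)

theorem exists_eq_complement_mul (hΓ : Γ.CliqueFree 3) (h : gen Γ i * x = gen Γ j * y) :
    ∃ w, x = complement Γ i j * w ∧ y = complement Γ j i * w :=
  gensCompleteBelow hΓ _ (Nat.lt_succ_self _) h

theorem isLeftCancelMul (hΓ : Γ.CliqueFree 3) : IsLeftCancelMul (ArtinMonoid Γ) where
  mul_left_cancel a b c h := by
    induction a using induction_gen_mul with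
    | one => simpa using h
    | gen_mul i a ih =>
      simp only [mul_assoc] at h
      exact ih (completes_self_iff.1 (exists_eq_complement_mul hΓ h))

theorem exists_dvd_iff_of_dvd (hΓ : Γ.CliqueFree 3) {a b m : ArtinMonoid Γ} (ha : a ∣ m)
    (hb : b ∣ m) : ∃ l, ∀ c, l ∣ c ↔ a ∣ c ∧ b ∣ c := by
  have := isLeftCancelMul hΓ
  have mul_dvd_mul_left_iff {x y z : ArtinMonoid Γ} : x * y ∣ x * z ↔ y ∣ z :=
    (IsLeftRegular.all x).dvd_cancel_left
  induction hn : length m using Nat.strong_induction_on generalizing a b m with | _ n ih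
  obtain rfl | ⟨i, a, rfl⟩ := eq_one_or_exists_gen_mul a
  · exact ⟨b, fun c => by simp⟩
  obtain rfl | ⟨j, b, rfl⟩ := eq_one_or_exists_gen_mul b
  · exact ⟨gen Γ i * a, fun c => by simp⟩
  obtain ⟨p, rfl⟩ := ha
  obtain ⟨q, hpq⟩ := hb
  have hlen := congrArg length hpq
  simp only [mul_assoc, length_mul, length_gen] at hpq hlen hn
  obtain ⟨w, hw, hw'⟩ := exists_eq_complement_mul hΓ hpq
  obtain ⟨d, hd⟩ := ih (length (a * p)) (by simp; omega) (dvd_mul_right a p) ⟨w, hw⟩ rfl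
  obtain ⟨e, he⟩ := ih (length (b * q)) (by simp; omega) (dvd_mul_right b q) ⟨w, hw'⟩ rfl
  obtain ⟨r, rfl⟩ := ((he e).1 dvd_rfl).2
  have hr {c v} (hc : b * c = complement Γ j i * v) : r ∣ v :=
    mul_dvd_mul_left_iff.1 (hc ▸ (he (b * c)).2 ⟨dvd_mul_right b c, v, hc⟩)
  have hdr {c s v} (hc : a * c = complement Γ i j * v) (hs : b * s = complement Γ j i * v) :
      d ∣ a * c ∧ complement Γ i j * r ∣ a * c :=
    ⟨(hd _).2 ⟨dvd_mul_right a c, v, hc⟩, hc ▸ mul_dvd_mul_left_iff.2 (hr hs)⟩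
  obtain ⟨l, hl⟩ := ih (length (a * p)) (by simp; omega) (hdr hw hw').1 (hdr hw hw').2 rfl
  refine ⟨gen Γ i * l, fun c => ⟨fun h => ⟨?_, ?_⟩, ?_⟩⟩
  · exact (mul_dvd_mul_left_iff.2 (((hd l).1 ((hl l).1 dvd_rfl).1)).1).trans h
  · have hb : b ∣ complement Γ j i * r := ((he _).1 dvd_rfl).1
    refine ((mul_dvd_mul_left_iff.2 hb).trans ?_).trans h
    rw [← mul_assoc, ← gen_mul_complement, mul_assoc]
    exact mul_dvd_mul_left_iff.2 ((hl l).1 dvd_rfl).2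
  · rintro ⟨⟨s, rfl⟩, t, ht⟩
    simp only [mul_assoc] at ht ⊢
    obtain ⟨v, hv, hv'⟩ := exists_eq_complement_mul hΓ ht
    exact mul_dvd_mul_left_iff.2 ((hl _).2 (hdr hv hv'))

end ArtinMonoid

section FundamentalElement

variable {N N' : Type*} [Monoid N] [Monoid N'] {s : ℕ → N} {m : ℕ}

/-- `s 0 * s 1 * ⋯ * s (k - 1)`. -/
def partialProd (s : ℕ → N) (k : ℕ) : N := ((List.range k).map s).prod

/-- Garside's half twist on the sequence `s 0, …, s (k - 1)`, in the form in which
`BraidGroup.Δ` is given. -/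
def halfTwist (s : ℕ → N) (k : ℕ) : N :=
  ((List.range k).reverse.map fun j => partialProd s (j + 1)).prod

@[simp] theorem partialProd_zero (s : ℕ → N) : partialProd s 0 = 1 := rfl

theorem partialProd_succ (s : ℕ → N) (k : ℕ) : partialProd s (k + 1) = partialProd s k * s k := by
  simp [partialProd, List.range_succ]

theorem partialProd_succ' (s : ℕ → N) (k : ℕ) :
    partialProd s (k + 1) = s 0 * partialProd (fun i => s (i + 1)) k := by
  simp [partialProd, List.range_succ_eq_map, Function.comp_def]

@[simp] theorem halfTwist_zero (s : ℕ → N) : halfTwist s 0 = 1 := rfl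

theorem halfTwist_succ (s : ℕ → N) (k : ℕ) :
    halfTwist s (k + 1) = partialProd s (k + 1) * halfTwist s k := by
  simp [halfTwist, List.range_succ]

theorem map_partialProd (f : N →* N') (s : ℕ → N) (k : ℕ) :
    f (partialProd s k) = partialProd (f ∘ s) k := by
  simp [partialProd, map_list_prod]

theorem map_halfTwist (f : N →* N') (s : ℕ → N) (k : ℕ) :
    f (halfTwist s k) = halfTwist (f ∘ s) k := by
  simp [halfTwist, map_list_prod, map_partialProd, Function.comp_def]

theorem map_halfTwist_eq_pow (f : N →* N') {a : N'} {k : ℕ} (h : ∀ i < k, f (s i) = a) :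
    f (halfTwist s k) = a ^ (k + 1).choose 2 := by
  have map_partialProd_eq_pow {l : ℕ} (hl : l ≤ k) : f (partialProd s l) = a ^ l := by
    induction l with
    | zero => simp
    | succ l ih => rw [partialProd_succ, map_mul, ih (by omega), h l hl, pow_succ]
  induction k with
  | zero => simp
  | succ k ih =>
    rw [halfTwist_succ, map_mul, map_partialProd_eq_pow le_rfl, ih (fun i hi => h i (by omega))
      (fun hl => map_partialProd_eq_pow (by omega)), ← pow_add, Nat.choose_succ_succ' (k + 1) 1,
      Nat.choose_one_right]

/-- The braid relations for the generators `s i` with `i < m`. -/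
structure IsBraidSeq (s : ℕ → N) (m : ℕ) : Prop where
  comm : ∀ i j, i + 1 < j → j < m → Commute (s i) (s j)
  braid : ∀ i, i + 1 < m → s i * s (i + 1) * s i = s (i + 1) * s i * s (i + 1)

namespace IsBraidSeq

theorem commute_partialProd (h : IsBraidSeq s m) {j k : ℕ} (hj : j < m) (hk : k < j) :
    Commute (s j) (partialProd s k) := by
  induction k with
  | zero => exact Commute.one_right _
  | succ k ih =>
    rw [partialProd_succ]
    exact (ih (by omega)).mul_right (h.comm k j hk hj).symm

theorem commute_halfTwist (h : IsBraidSeq s m) {j k : ℕ} (hj : j < m) (hk : k < j) :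
    Commute (s j) (halfTwist s k) := by
  induction k with
  | zero => exact Commute.one_right _
  | succ k ih =>
    rw [halfTwist_succ]
    exact (h.commute_partialProd hj hk).mul_right (ih (by omega))

theorem succ_mul_partialProd (h : IsBraidSeq s m) {i k : ℕ} (hk : i + 1 < k) (hm : k ≤ m) :
    s (i + 1) * partialProd s k = partialProd s k * s i := by
  induction k, hk using Nat.le_induction with
  | base =>
    rw [partialProd_succ, partialProd_succ, mul_assoc (partialProd s i), ← mul_assoc (s (i + 1)),
      (h.commute_partialProd (by omega) (by omega)).eq, mul_assoc, mul_assoc (partialProd s i),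
      ← mul_assoc (s (i + 1)), ← h.braid i (by omega)]
  | succ k hk ih =>
    rw [partialProd_succ, ← mul_assoc, ih (by omega), mul_assoc, mul_assoc,
      (h.comm i k (by omega) (by omega)).eq]

theorem partialProd_succ_mul_partialProd (h : IsBraidSeq s m) {l j : ℕ} (hl : l < m) (hj : j ≤ l) :
    partialProd (fun i => s (i + 1)) j * partialProd s (l + 1) =
      partialProd s (l + 1) * partialProd s j := by
  induction j with
  | zero => simp
  | succ j ih =>
    rw [partialProd_succ, partialProd_succ s j, mul_assoc, h.succ_mul_partialProd (by omega) hl,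
      ← mul_assoc, ih (by omega), mul_assoc]

theorem zero_mul_halfTwist (h : IsBraidSeq s m) {k : ℕ} (hk : k < m) :
    s 0 * halfTwist s (k + 1) = halfTwist s (k + 1) * s k := by
  cases k with
  | zero => simp [halfTwist_succ, partialProd_succ]
  | succ l =>
    calc s 0 * halfTwist s (l + 2)
        = s 0 * (partialProd s (l + 2) * partialProd s (l + 1)) * halfTwist s l := by
          simp only [halfTwist_succ, mul_assoc]
      _ = partialProd s (l + 2) * partialProd s (l + 2) * halfTwist s l := by
          rw [← h.partialProd_succ_mul_partialProd hk le_rfl, ← mul_assoc, ← partialProd_succ']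
      _ = partialProd s (l + 2) * partialProd s (l + 1) * (s (l + 1) * halfTwist s l) := by
          rw [partialProd_succ s (l + 1)]; simp only [mul_assoc]
      _ = halfTwist s (l + 2) * s (l + 1) := by
          rw [(h.commute_halfTwist hk l.lt_succ_self).eq]; simp only [halfTwist_succ, mul_assoc]

theorem mul_halfTwist (h : IsBraidSeq s m) {i k : ℕ} (hi : i < k) (hk : k ≤ m) :
    s i * halfTwist s k = halfTwist s k * s (k - 1 - i) := by
  induction k generalizing i with
  | zero => omega
  | succ l ih =>
    cases i with
    | zero => exact h.zero_mul_halfTwist hk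
    | succ i =>
      rw [halfTwist_succ, ← mul_assoc, h.succ_mul_partialProd hi hk, mul_assoc,
        ih (by omega) (by omega), ← mul_assoc]
      congr 2
      omega

theorem commute_halfTwist_sq (h : IsBraidSeq s m) {i k : ℕ} (hi : i < k) (hk : k ≤ m) :
    Commute (halfTwist s k ^ 2) (s i) := by
  have hrev := h.mul_halfTwist (i := k - 1 - i) (by omega) hk
  rw [show k - 1 - (k - 1 - i) = i by omega] at hrev
  refine Commute.symm ?_
  rw [Commute, SemiconjBy, sq, ← mul_assoc, h.mul_halfTwist hi hk, mul_assoc, hrev, mul_assoc]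

theorem dvd_halfTwist (h : IsBraidSeq s m) {i k : ℕ} (hi : i < k) (hk : k ≤ m) :
    s i ∣ halfTwist s k := by
  induction k generalizing i with
  | zero => omega
  | succ l ih =>
    rw [halfTwist_succ]
    cases i with
    | zero => exact dvd_mul_of_dvd_left ⟨_, partialProd_succ' s l⟩ _
    | succ i =>
      obtain ⟨r, hr⟩ := ih (i := i) (by omega) (by omega)
      exact ⟨partialProd s (l + 1) * r,
        by rw [hr, ← mul_assoc, ← h.succ_mul_partialProd hi hk, mul_assoc]⟩

end IsBraidSeq

end FundamentalElement

section CentralLocalization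

universe u

theorem exists_injective_isUnit_of_commute {M : Type u} [Monoid M] [IsLeftCancelMul M] {δ : M}
    (hδ : ∀ a, Commute δ a) :
    ∃ (H : Type u) (_ : Monoid H) (f : M →* H), Function.Injective f ∧ IsUnit (f δ) := by
  have comm_of_mem : ∀ s ∈ Submonoid.powers δ, ∀ a, s * a = a * s := by
    rintro _ ⟨k, rfl⟩ a
    exact ((hδ a).pow_left k).eq
  let _ : OreLocalization.OreSet (Submonoid.powers δ) :=
    { ore_right_cancel := fun r₁ r₂ s h =>
        ⟨s, by rw [comm_of_mem s s.2, comm_of_mem s s.2, h]⟩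
      oreNum := fun r _ => r
      oreDenom := fun _ s => s
      ore_eq := fun r s => comm_of_mem s s.2 r }
  refine ⟨OreLocalization (Submonoid.powers δ) M, inferInstance, OreLocalization.numeratorHom,
    fun a b h => ?_, OreLocalization.numerator_isUnit ⟨δ, Submonoid.mem_powers δ⟩⟩
  rw [OreLocalization.numeratorHom_apply, OreLocalization.numeratorHom_apply,
    OreLocalization.oreDiv_eq_iff] at h
  obtain ⟨u, v, huv, hv⟩ := h
  simp only [OneMemClass.coe_one, mul_one] at hv
  rw [Submonoid.smul_def, smul_eq_mul, smul_eq_mul, ← hv] at huv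
  exact (mul_left_cancel huv).symm

theorem isUnit_map_of_dvd {M H : Type*} [Monoid M] [IsLeftCancelMul M] [Monoid H] (f : M →* H)
    {a δ : M} (hδ : Commute δ a) (hf : IsUnit (f δ)) (ha : a ∣ δ) : IsUnit (f a) := by
  obtain ⟨r, rfl⟩ := ha
  have har : Commute a r := mul_left_cancel (a := a) <| by rw [← mul_assoc a r, hδ.eq]
  rw [map_mul, (har.map f).isUnit_mul_iff] at hf
  exact hf.1

end CentralLocalization

section OrderLemmas

theorem exists_le_iff_of_strictMono {α : Type*} [PartialOrder α] {f : α → ℤ} (hf : StrictMono f)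
    (hlub : ∀ ⦃x y z : α⦄, x ≤ z → y ≤ z → ∃ l, ∀ c, l ≤ c ↔ x ≤ c ∧ y ≤ c) {x y z : α}
    (hx : z ≤ x) (hy : z ≤ y) : ∃ g, ∀ c, c ≤ g ↔ c ≤ x ∧ c ≤ y := by
  obtain ⟨_, ⟨g, ⟨hgx, hgy⟩, rfl⟩, hmax⟩ :=
    Int.exists_greatest_of_bdd (P := fun k => ∃ c, (c ≤ x ∧ c ≤ y) ∧ f c = k)
      ⟨f x, fun _ ⟨c, hc, h⟩ => h ▸ hf.monotone hc.1⟩ ⟨f z, z, ⟨hx, hy⟩, rfl⟩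
  refine ⟨g, fun c => ⟨fun h => ⟨h.trans hgx, h.trans hgy⟩, fun ⟨hcx, hcy⟩ => ?_⟩⟩
  obtain ⟨l, hl⟩ := hlub hcx hgx
  obtain ⟨hcl, hgl⟩ := (hl l).1 le_rfl
  have hlg : f l ≤ f g := hmax _ ⟨l, ⟨(hl x).2 ⟨hcx, hgx⟩, (hl y).2 ⟨hcy, hgy⟩⟩, rfl⟩
  rwa [hgl.eq_of_not_lt fun h => (hf h).not_ge hlg]

theorem exists_map_succ_eq_of_monotone {g : ℕ → ℤ} (hg : Monotone g) {D : ℕ}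
    (hD : g (D + 1) ≤ g 0 + D) : ∃ k ≤ D, g (k + 1) = g k := by
  by_contra! hne
  have add_le (k : ℕ) (hk : k ≤ D + 1) : g 0 + k ≤ g k := by
    induction k with
    | zero => simp
    | succ k ih =>
      have hlt := (hg (Nat.le_add_right k 1)).lt_of_ne (hne k (by omega)).symm
      have := ih (by omega)
      push_cast
      omega
  have := add_le (D + 1) le_rfl
  omega

variable {L : Type*} [SemilatticeInf L] {φ ψ : L ≃o L} {len : L → ℤ} {a b : L} {m D : ℕ}

/-- The meet of the orbit segment `a, φ a, …, φ^m a`. -/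
def orbitInf (φ : L ≃o L) (m : ℕ) (a : L) : L :=
  (Finset.range (m + 1)).inf' Finset.nonempty_range_add_one fun i => (φ ^ i) a

theorem le_orbitInf_iff : b ≤ orbitInf φ m a ↔ ∀ i ≤ m, b ≤ (φ ^ i) a := by
  simp [orbitInf]

theorem orbitInf_le {i : ℕ} (hi : i ≤ m) : orbitInf φ m a ≤ (φ ^ i) a :=
  le_orbitInf_iff.1 le_rfl i hi

theorem le_map_orbitInf_iff : b ≤ ψ (orbitInf φ m a) ↔ ∀ i ≤ m, b ≤ ψ ((φ ^ i) a) := by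
  simp only [← ψ.symm_apply_le, le_orbitInf_iff]

theorem orbitInf_antitone (φ : L ≃o L) (a : L) : Antitone fun m => orbitInf φ m a :=
  fun _ _ h => le_orbitInf_iff.2 fun _ hi => orbitInf_le (hi.trans h)

theorem orbitInf_le_map_pow (hφψ : Commute φ ψ) (hψ : ∀ x, x ≤ ψ x)
    (ha : a ≤ ψ ((φ ^ (m + 1)) a)) {j : ℕ} (hj : j ≤ m + 1) :
    orbitInf φ m a ≤ ψ ((φ ^ j) (orbitInf φ m a)) := by
  refine (le_map_orbitInf_iff (ψ := ψ * φ ^ j)).2 fun i hi => ?_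
  rw [RelIso.mul_apply, ← RelIso.mul_apply (φ ^ j), ← pow_add]
  obtain h | h := Nat.lt_or_ge (j + i) (m + 1)
  · exact (orbitInf_le (Nat.lt_succ_iff.1 h)).trans (hψ _)
  · obtain ⟨k, hk⟩ := Nat.exists_eq_add_of_le' h
    calc orbitInf φ m a ≤ (φ ^ k) a := orbitInf_le (by omega)
      _ ≤ (φ ^ k * ψ) ((φ ^ (m + 1)) a) := (φ ^ k).monotone ha
      _ = ψ ((φ ^ (j + i)) a) := by
        rw [(hφψ.pow_left k).eq, hk, pow_add φ k]
        rfl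

theorem exists_le_map_of_le_pow_map (hlen : StrictMono len) (hφψ : Commute φ ψ)
    (hψ : ∀ x, x ≤ ψ x) (hψlen : ∀ x, len (ψ x) ≤ len x + D) (ha : a ≤ ψ ((φ ^ (D + 1)) a)) :
    ∃ b, b ≤ φ b := by
  -- `hbound` keeps the length of the decreasing sequence `orbitInf φ k b` bounded below, so the
  -- sequence stabilises, and its final value lies below its image.
  set b := orbitInf φ D a
  have hbound : b ≤ ψ (orbitInf φ (D + 1) b) :=
    le_map_orbitInf_iff.2 fun _ => orbitInf_le_map_pow hφψ hψ ha
  obtain ⟨m, -, hm⟩ := exists_map_succ_eq_of_monotone (g := fun k => -len (orbitInf φ k b))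
    (hlen.monotone.comp_antitone (orbitInf_antitone φ b)).neg <| by
      have h0 : len (orbitInf φ 0 b) ≤ len b := hlen.monotone (orbitInf_le le_rfl)
      have := (hlen.monotone hbound).trans (hψlen _)
      linarith
  have hstab : orbitInf φ (m + 1) b = orbitInf φ m b :=
    (orbitInf_antitone φ b m.le_succ).eq_of_not_lt fun h => (hlen h).ne (neg_injective hm)
  refine ⟨orbitInf φ m b, le_map_orbitInf_iff.2 fun i hi => ?_⟩
  rw [← hstab, ← RelIso.mul_apply, ← pow_succ']
  exact orbitInf_le (by omega)

theorem monotone_pow_map (ha : a ≤ φ a) : Monotone fun k : ℕ => (φ ^ k) a :=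
  monotone_nat_of_le_succ fun k => by
    rw [pow_succ, RelIso.mul_apply]
    exact (φ ^ k).monotone ha

theorem le_pow_map_of_le_map (ha : a ≤ φ a) (k : ℕ) : a ≤ (φ ^ k) a :=
  monotone_pow_map ha k.zero_le

theorem exists_inf_pow_inf_pow_eq (hlen : StrictMono len) {d : L} (ha : a ≤ φ a)
    (hd : d ≤ φ d) (hD : 0 < D) (had : len d ≤ len (d ⊓ a) + D) :
    ∃ M, 1 ≤ M ∧ M ≤ D ∧ d ⊓ (φ ^ M) (d ⊓ (φ ^ M) a) = d ⊓ (φ ^ M) a := by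
  have inf_pow_add (i k : ℕ) : d ⊓ (φ ^ i) (d ⊓ (φ ^ k) a) = d ⊓ (φ ^ (i + k)) a := by
    have hdi : d ≤ (φ ^ i) d := le_pow_map_of_le_map hd i
    rw [map_inf, ← inf_assoc, inf_eq_left.2 hdi, pow_add, RelIso.mul_apply]
  have hmono : Monotone fun k : ℕ => d ⊓ (φ ^ k) a := fun k l hkl =>
    inf_le_inf_left d (monotone_pow_map ha hkl)
  obtain ⟨k, hkD, hk⟩ := exists_map_succ_eq_of_monotone (D := D) (hlen.monotone.comp hmono) <|
    (hlen.monotone inf_le_left).trans had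
  have hstab (j : ℕ) : d ⊓ (φ ^ (j + k)) a = d ⊓ (φ ^ k) a := by
    induction j with
    | zero => rw [Nat.zero_add]
    | succ j ih =>
      rw [Nat.succ_add, ← Nat.one_add, ← inf_pow_add, ih, inf_pow_add, Nat.one_add]
      exact ((hmono k.le_succ).eq_of_not_lt fun h => (hlen h).ne' hk).symm
  refine ⟨max k 1, le_max_right _ _, max_le hkD hD, ?_⟩
  obtain ⟨i, hi⟩ := Nat.exists_eq_add_of_le' (le_max_left k 1)
  rw [inf_pow_add, hi, ← Nat.add_assoc, hstab, hstab]

end OrderLemmas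

section Arithmetic

variable {F : ℕ → ℤ} {D : ℕ}

-- `t` is the limit of `F k / k`.
theorem exists_forall_le_mul_le_add_one
    (hle : ∀ k m, 0 < k → 0 < m → m * F k ≤ F (k * m))
    (hge : ∀ k m, 0 < k → 0 < m → F (k * m) ≤ m * (F k + 1)) :
    ∃ t : ℝ, ∀ k, 0 < k → F k ≤ k * t ∧ k * t ≤ F k + 1 := by
  obtain ⟨t, hlower, hupper⟩ := exists_between_of_forall_le
    (s := {r : ℝ | ∃ k : ℕ, 0 < k ∧ F k / k = r}) (t := {r | ∃ k : ℕ, 0 < k ∧ (F k + 1) / k = r})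
    ⟨_, 1, one_pos, rfl⟩ ⟨_, 1, one_pos, rfl⟩ <| by
      rintro _ ⟨k, hk, rfl⟩ _ ⟨m, hm, rfl⟩
      rw [div_le_div_iff₀ (by exact_mod_cast hk) (by exact_mod_cast hm)]
      have := (hle k m hk hm).trans (mul_comm m k ▸ hge m k hm hk)
      rw [mul_comm, mul_comm ((F m : ℝ) + 1)]
      exact_mod_cast this
  exact ⟨t, fun k hk => ⟨(div_le_iff₀' (by exact_mod_cast hk)).1 (hlower ⟨k, hk, rfl⟩),
    (le_div_iff₀' (by exact_mod_cast hk)).1 (hupper ⟨k, hk, rfl⟩)⟩⟩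

theorem exists_forall_map_mul_le (hD : 0 < D)
    (hle : ∀ k m, 0 < k → 0 < m → m * F k ≤ F (k * m))
    (hge : ∀ k m, 0 < k → 0 < m → F (k * m) ≤ m * (F k + 1))
    (hgap : ∀ k, 0 < k → F (k * (D + 1)) + 1 < (D + 1) * (F k + 1)) :
    ∃ k, 0 < k ∧ k ≤ D ∧ ∀ M, 1 ≤ M → M ≤ D → F (k * M) ≤ M * F k := by
  obtain ⟨t, ht⟩ := exists_forall_le_mul_le_add_one hle hge
  have hgap' {k : ℕ} (hk : 0 < k) : (F (k * (D + 1)) : ℝ) + 2 ≤ (D + 1) * (F k + 1) := by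
    have := hgap k hk
    exact_mod_cast (by omega : F (k * (D + 1)) + 2 ≤ (D + 1) * (F k + 1))
  have lt_F_add_one {k : ℕ} (hk : 0 < k) : k * t < F k + 1 := by
    have := (ht (k * (D + 1)) (by positivity)).2
    have := hgap' hk
    push_cast at *
    nlinarith
  have add_inv_lt_F_add_one {k : ℕ} (hk : 0 < k) : k * t + 1 / (D + 1) < F k + 1 := by
    have := lt_F_add_one (k := k * (D + 1)) (by positivity)
    have := hgap' hk
    push_cast at *
    field_simp
    linarith
  obtain ⟨k, hk, hkD, hround⟩ := Real.exists_nat_abs_mul_sub_round_le t hD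
  obtain ⟨hround_ge, hround_le⟩ := abs_le.1 hround
  have round_le : round (k * t) ≤ F k := by
    have := add_inv_lt_F_add_one hk
    exact Int.lt_add_one_iff.1 (by exact_mod_cast (by linarith : (round (k * t) : ℝ) < F k + 1))
  refine ⟨k, hk, hkD, fun M hM hMD => Int.lt_add_one_iff.1 ?_⟩
  have hkt : k * t ≤ F k + 1 / (D + 1) := by
    have : (round (k * t) : ℝ) ≤ F k := by exact_mod_cast round_le
    linarith
  have hfrac : (M : ℝ) * (1 / (D + 1)) < 1 := by
    rw [mul_one_div, div_lt_one (by positivity)]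
    exact_mod_cast Nat.lt_succ_of_le hMD
  have hM_le := (ht (k * M) (by positivity)).1
  have : (F (k * M) : ℝ) < M * F k + 1 := by
    push_cast at hM_le
    nlinarith
  exact_mod_cast this

end Arithmetic

section GarsideGroup

theorem monotone_zpow_of_one_le {G : Type*} [Group G] [Preorder G] [MulLeftMono G] {a : G}
    (ha : 1 ≤ a) : Monotone fun k : ℤ => a ^ k :=
  monotone_int_of_le_succ fun k => by
    rw [zpow_add_one]
    exact le_mul_of_one_le_right' ha

variable {G : Type*} [Group G] [SemilatticeInf G] {Δ : G} {len : G → ℤ}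

/-- `Δ` is a Garside element for the left-invariant order of `G`, and `len` is an additive length.
Given left invariance, `mul_le_mul_iff` says that conjugation by `Δ` preserves the order. -/
structure IsGarside (Δ : G) (len : G → ℤ) : Prop where
  len_mul : ∀ x y, len (x * y) = len x + len y
  len_strictMono : StrictMono len
  one_lt : 1 < Δ
  mul_le_mul_iff : ∀ x y, x * Δ ≤ y * Δ ↔ x ≤ y
  exists_zpow_le : ∀ x, ∃ k : ℤ, Δ ^ k ≤ x

namespace IsGarside

variable {x y z w : G} {p q : ℤ} {D : ℕ}

theorem len_one (h : IsGarside Δ len) : len 1 = 0 := by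
  simpa using h.len_mul 1 1

theorem len_zpow (h : IsGarside Δ len) (x : G) (k : ℤ) : len (x ^ k) = k * len x := by
  let f : G →* Multiplicative ℤ := .mk' (fun x => .ofAdd (len x)) fun x y => by simp [h.len_mul]
  exact congrArg Multiplicative.toAdd (map_zpow f x k)

theorem len_pos (h : IsGarside Δ len) : 0 < len Δ := h.len_one ▸ h.len_strictMono h.one_lt

theorem mul_zpow_le_mul_zpow_iff (h : IsGarside Δ len) (k : ℤ) :
    x * Δ ^ k ≤ y * Δ ^ k ↔ x ≤ y := by
  induction k with
  | zero => simp
  | succ k ih => rw [zpow_add_one, ← mul_assoc, ← mul_assoc, h.mul_le_mul_iff, ih]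
  | pred k ih =>
    rw [← h.mul_le_mul_iff, mul_assoc, mul_assoc, ← zpow_add_one, sub_add_cancel, ih]

theorem len_eq_of_isConj (h : IsGarside Δ len) (hxy : IsConj x y) : len x = len y := by
  obtain ⟨c, hc⟩ := hxy
  have := congrArg len hc
  rw [h.len_mul, h.len_mul, add_comm] at this
  exact add_right_cancel this

theorem le_of_zpow_le (h : IsGarside Δ len) (hp : Δ ^ p ≤ x) : p ≤ max (len x) 0 := by
  have hlen := h.len_strictMono.monotone hp
  rw [h.len_zpow] at hlen
  rcases le_total p 0 with hp0 | hp0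
  · exact le_max_of_le_right hp0
  · exact le_max_of_le_left ((le_mul_of_one_le_right hp0 h.len_pos).trans hlen)

/-- The largest infimum of a conjugate of `z`. -/
noncomputable def summitInf (Δ z : G) : ℤ := sSup {p | ∃ y, IsConj z y ∧ Δ ^ p ≤ y}

variable [MulLeftMono G]

/-- The order automorphism `x ↦ z * x * Δ ^ (-p)`. An element `c` lies below its image exactly when
`Δ ^ p ≤ c⁻¹ * z * c`. -/
def twist (h : IsGarside Δ len) (z : G) (p : ℤ) : G ≃o G where
  toEquiv := (Equiv.mulLeft z).trans (Equiv.mulRight (Δ ^ (-p)))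
  map_rel_iff' := (h.mul_zpow_le_mul_zpow_iff _).trans (mul_le_mul_iff_left z)

theorem twist_apply (h : IsGarside Δ len) (z : G) (p : ℤ) (x : G) :
    h.twist z p x = z * x * Δ ^ (-p) := rfl

theorem twist_mul (h : IsGarside Δ len) (z w : G) (p q : ℤ) :
    h.twist z p * h.twist w q = h.twist (z * w) (p + q) := by
  ext x
  simp only [RelIso.mul_apply, twist_apply, mul_assoc, ← zpow_add, neg_add_rev]

theorem twist_pow (h : IsGarside Δ len) (z : G) (p : ℤ) (m : ℕ) :
    h.twist z p ^ m = h.twist (z ^ m) (m * p) := by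
  induction m with
  | zero => ext x; simp [twist_apply]
  | succ m ih => rw [pow_succ, ih, twist_mul, pow_succ, Nat.cast_succ, add_one_mul]

theorem le_twist_iff (h : IsGarside Δ len) : x ≤ h.twist z p y ↔ x * Δ ^ p ≤ z * y := by
  rw [← h.mul_zpow_le_mul_zpow_iff p, twist_apply, mul_assoc _ (Δ ^ (-p)), ← zpow_add,
    neg_add_cancel, zpow_zero, mul_one]

theorem exists_isConj_zpow_le_iff (h : IsGarside Δ len) :
    (∃ y, IsConj z y ∧ Δ ^ p ≤ y) ↔ ∃ c, c ≤ h.twist z p c := by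
  have hc (c : G) : Δ ^ p ≤ c⁻¹ * z * c ↔ c ≤ h.twist z p c := by
    rw [h.le_twist_iff, mul_assoc, le_inv_mul_iff_mul_le]
  constructor
  · rintro ⟨_, hy, hle⟩
    obtain ⟨c, rfl⟩ := isConj_iff.1 hy
    exact ⟨c⁻¹, (hc _).1 (by rwa [inv_inv])⟩
  · rintro ⟨c, hle⟩
    exact ⟨_, isConj_iff.2 ⟨c⁻¹, by rw [inv_inv]⟩, (hc c).2 hle⟩

theorem le_summitInf_iff (h : IsGarside Δ len) :
    p ≤ summitInf Δ z ↔ ∃ c, c ≤ h.twist z p c := by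
  rw [← h.exists_isConj_zpow_le_iff]
  have hbdd : BddAbove {p : ℤ | ∃ y, IsConj z y ∧ Δ ^ p ≤ y} :=
    ⟨_, fun _ ⟨_, hy, hle⟩ => h.len_eq_of_isConj hy ▸ h.le_of_zpow_le hle⟩
  refine ⟨fun hp => ?_, fun hp => le_csSup hbdd hp⟩
  obtain ⟨k, hk⟩ := h.exists_zpow_le z
  have hne : {p : ℤ | ∃ y, IsConj z y ∧ Δ ^ p ≤ y}.Nonempty := ⟨k, z, .refl z, hk⟩
  obtain ⟨y, hy, hle⟩ := Int.csSup_mem hne hbdd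
  exact ⟨y, hy, (monotone_zpow_of_one_le h.one_lt.le hp).trans hle⟩

theorem mul_summitInf_le (h : IsGarside Δ len) (z : G) (m : ℕ) :
    m * summitInf Δ z ≤ summitInf Δ (z ^ m) := by
  obtain ⟨c, hc⟩ := h.le_summitInf_iff.1 (le_refl (summitInf Δ z))
  rw [h.le_summitInf_iff, ← twist_pow]
  exact ⟨c, le_pow_map_of_le_map hc m⟩

theorem summitInf_pow_add_one_lt (h : IsGarside Δ len) {j D : ℕ} (hjD : j * len Δ ≤ D) (z : G) :
    summitInf Δ (z ^ (D + 1)) + j < (D + 1) * (summitInf Δ z + 1) := by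
  by_contra! hle
  rw [← sub_le_iff_le_add] at hle
  obtain ⟨c, hc⟩ := h.le_summitInf_iff.1 hle
  refine (lt_add_one (summitInf Δ z)).not_ge (h.le_summitInf_iff.2 ?_)
  refine exists_le_map_of_le_pow_map (ψ := h.twist 1 (-j)) (D := D) (a := c) h.len_strictMono
    ?_ (fun x => ?_) (fun x => ?_) ?_
  · rw [Commute, SemiconjBy, twist_mul, twist_mul, one_mul, mul_one, add_comm]
  · rw [twist_apply, neg_neg, one_mul, zpow_natCast]
    exact le_mul_of_one_le_right' (one_le_pow_of_one_le' h.one_lt.le j)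
  · rw [twist_apply, neg_neg, one_mul, h.len_mul, h.len_zpow]
    exact add_le_add_right hjD _
  · rw [twist_pow, ← RelIso.mul_apply, twist_mul, one_mul, neg_add_eq_sub]
    exact_mod_cast hc

theorem exists_forall_summitInf_pow_le (h : IsGarside Δ len) (hD : len Δ = D) (z : G) :
    ∃ k, 0 < k ∧ k ≤ D ∧
      ∀ M : ℕ, 1 ≤ M → M ≤ D → summitInf Δ (z ^ (k * M)) ≤ M * summitInf Δ (z ^ k) := by
  refine exists_forall_map_mul_le (F := fun k => summitInf Δ (z ^ k)) (by have := h.len_pos; omega)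
    (fun k m _ _ => ?_) (fun k m _ hm => ?_) (fun k _ => ?_)
  · simpa only [pow_mul] using h.mul_summitInf_le (z ^ k) m
  · obtain ⟨m, rfl⟩ := Nat.exists_eq_add_one.2 hm
    simpa [pow_mul] using (h.summitInf_pow_add_one_lt (j := 0) (D := m) (by simp) (z ^ k)).le
  · simpa only [pow_mul, Nat.cast_one] using
      h.summitInf_pow_add_one_lt (j := 1) (by rw [hD, Nat.cast_one, one_mul]) (z ^ k)

theorem exists_isConj_zpow_le_pow (h : IsGarside Δ len) (hD : len Δ = D) (x : G) :
    ∃ y, IsConj x y ∧ ∃ k, 0 < k ∧ k ≤ D ∧ ∃ u : ℤ, Δ ^ u ≤ y ^ k ∧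
      ∀ M : ℕ, 1 ≤ M → M ≤ D → ¬ Δ ^ (M * u + 1) ≤ y ^ (k * M) := by
  obtain ⟨k, hk, hkD, hmax⟩ := h.exists_forall_summitInf_pow_le hD x
  obtain ⟨_, hconj, hu⟩ :=
    h.exists_isConj_zpow_le_iff.2 (h.le_summitInf_iff.1 (le_refl (summitInf Δ (x ^ k))))
  obtain ⟨g, rfl⟩ := isConj_iff.1 hconj
  rw [← conj_pow] at hu
  have hy : IsConj x (g * x * g⁻¹) := isConj_iff.2 ⟨g, rfl⟩
  refine ⟨_, hy, k, hk, hkD, _, hu, fun M hM hMD hlt => (hmax M hM hMD).not_gt ?_⟩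
  rw [← Int.add_one_le_iff, h.le_summitInf_iff, ← h.exists_isConj_zpow_le_iff]
  exact ⟨_, hy.pow _, hlt⟩

theorem exists_inf_twist_pow_eq (h : IsGarside Δ len) (hD : len Δ = D) {u : ℤ} (hu : Δ ^ u ≤ z) :
    ∃ M : ℕ, 1 ≤ M ∧ M ≤ D ∧ Δ ^ (M * u) ≤ z ^ M ∧
      Δ ⊓ h.twist (z ^ M) (M * u) (Δ ⊓ h.twist (z ^ M) (M * u) 1) =
        Δ ⊓ h.twist (z ^ M) (M * u) 1 := by
  have hone : 1 ≤ h.twist z u 1 := h.le_twist_iff.2 (by rwa [one_mul, mul_one])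
  have hΔ : Δ ≤ h.twist z u Δ := h.le_twist_iff.2 <| by
    rw [← zpow_one_add, add_comm, zpow_add_one]
    exact (h.mul_le_mul_iff _ _).2 hu
  have hlenΔ : len Δ ≤ len (Δ ⊓ 1) + D := by
    rw [inf_eq_right.2 h.one_lt.le, h.len_one, zero_add, hD]
  obtain ⟨M, hM, hMD, hstab⟩ := exists_inf_pow_inf_pow_eq h.len_strictMono hone hΔ
    (by have := h.len_pos; omega) hlenΔ
  have hle := le_pow_map_of_le_map hone M
  rw [twist_pow] at hstab hle
  rw [le_twist_iff, one_mul, mul_one] at hle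
  exact ⟨M, hM, hMD, hle, hstab⟩

theorem exists_isConj_pow_inf_twist_eq (h : IsGarside Δ len) (hD : len Δ = D) (x : G) :
    ∃ y, IsConj x y ∧ ∃ M : ℕ, 1 ≤ M ∧ M ≤ D ^ 2 ∧ ∃ u : ℤ, Δ ^ u ≤ y ^ M ∧
      ¬ Δ ^ (u + 1) ≤ y ^ M ∧
      Δ ⊓ h.twist (y ^ M) u (Δ ⊓ h.twist (y ^ M) u 1) = Δ ⊓ h.twist (y ^ M) u 1 := by
  obtain ⟨y, hxy, k, hk, hkD, u, hu, hmax⟩ := h.exists_isConj_zpow_le_pow hD x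
  obtain ⟨M, hM, hMD, hle, hstab⟩ := h.exists_inf_twist_pow_eq hD hu
  rw [← pow_mul] at hle hstab
  exact ⟨y, hxy, k * M, Nat.mul_pos hk hM, sq D ▸ Nat.mul_le_mul hkD hMD, M * u, hle,
    hmax M hM hMD, hstab⟩

end IsGarside

end GarsideGroup

namespace BraidGroup

open SimpleGraph

variable {n : ℕ} {x y z : BraidGroup n}

theorem cliqueFree_pathGraph (m : ℕ) : (pathGraph m).CliqueFree 3 := by
  classical
  intro s hs
  obtain ⟨i, j, k, hij, hik, hjk, -⟩ := is3Clique_iff.1 hs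
  rw [pathGraph_adj] at hij hik hjk
  omega

theorem σ_braid {i j : Fin (n - 1)} (h : (pathGraph (n - 1)).Adj i j) :
    (σ i * σ j * σ i : BraidGroup n) = σ j * σ i * σ j := by
  wlog hij : (i : ℕ) + 1 = j generalizing i j
  · exact (this h.symm ((pathGraph_adj.1 h).resolve_left hij)).symm
  · exact mul_inv_eq_one.1 (PresentedGroup.one_of_mem (Or.inr ⟨i, j, hij, rfl⟩))

theorem σ_comm {i j : Fin (n - 1)} (h : ¬ (pathGraph (n - 1)).Adj i j) :
    (σ i * σ j : BraidGroup n) = σ j * σ i := by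
  wlog hij : (i : ℕ) + 1 < j generalizing i j
  · rw [pathGraph_adj] at h
    obtain rfl | hne := eq_or_ne i j
    · rfl
    · exact (this (by rw [pathGraph_adj]; omega) (by omega)).symm
  · exact mul_inv_eq_iff_eq_mul.1
      (mul_inv_eq_one.1 (PresentedGroup.one_of_mem (Or.inl ⟨i, j, hij, rfl⟩)))

/-- The monoid `B_n^+` of positive braids, presented by the braid relations. -/
abbrev PositiveMonoid (n : ℕ) := ArtinMonoid (pathGraph (n - 1))

/-- The canonical homomorphism `B_n^+ → B_n`. -/
def ofPositive (n : ℕ) : PositiveMonoid n →* BraidGroup n :=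
  PresentedMonoid.lift σ <| by
    rintro _ _ (h | h)
    · simpa using σ_braid h
    · simpa using σ_comm h

@[simp] theorem ofPositive_gen (i : Fin (n - 1)) : ofPositive n (.gen _ i) = σ i := rfl

theorem mrange_ofPositive : MonoidHom.mrange (ofPositive n) = positives n := by
  rw [MonoidHom.mrange_eq_map, ← PresentedMonoid.closure_range_of, MonoidHom.map_mclosure,
    ← Set.range_comp]
  rfl

/-- `σ'` on the level of positive braids. -/
def positiveSeq (n i : ℕ) : PositiveMonoid n := if h : i < n - 1 then .gen _ ⟨i, h⟩ else 1

theorem positiveSeq_val (i : Fin (n - 1)) : positiveSeq n i = .gen _ i := dif_pos i.2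

theorem ofPositive_comp_positiveSeq : ofPositive n ∘ positiveSeq n = σ' n := by
  funext i
  simp only [Function.comp_apply, positiveSeq, σ']
  split_ifs <;> simp

theorem isBraidSeq_positiveSeq : IsBraidSeq (positiveSeq n) (n - 1) where
  comm i j hij hj := by
    lift j to Fin (n - 1) using hj
    lift i to Fin (n - 1) using by omega
    rw [positiveSeq_val, positiveSeq_val]
    exact ArtinMonoid.gen_comm (by rw [pathGraph_adj]; omega)
  braid i hi := by
    simp only [positiveSeq, hi, show i < n - 1 by omega, dif_pos]
    exact ArtinMonoid.gen_braid (pathGraph_adj.2 (.inl rfl))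

/-- The fundamental braid as an element of `B_n^+`. -/
def positiveΔ (n : ℕ) : PositiveMonoid n := halfTwist (positiveSeq n) (n - 1)

theorem ofPositive_positiveΔ : ofPositive n (positiveΔ n) = Δ n := by
  rw [positiveΔ, map_halfTwist, ofPositive_comp_positiveSeq]
  rfl

theorem gen_mul_positiveΔ (i : Fin (n - 1)) :
    .gen _ i * positiveΔ n = positiveΔ n * .gen _ i.rev := by
  rw [← positiveSeq_val, ← positiveSeq_val, positiveΔ,
    isBraidSeq_positiveSeq.mul_halfTwist i.2 le_rfl]
  congr 2
  rw [Fin.val_rev]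
  omega

theorem gen_dvd_positiveΔ (i : Fin (n - 1)) : .gen _ i ∣ positiveΔ n :=
  positiveSeq_val i ▸ isBraidSeq_positiveSeq.dvd_halfTwist i.2 le_rfl

theorem commute_positiveΔ_sq (a : PositiveMonoid n) : Commute (positiveΔ n ^ 2) a := by
  induction a using ArtinMonoid.induction_gen_mul with
  | one => exact .one_right _
  | gen_mul i a ha =>
    refine .mul_right ?_ ha
    rw [← positiveSeq_val]
    exact isBraidSeq_positiveSeq.commute_halfTwist_sq i.2 le_rfl

theorem ofPositive_injective : Function.Injective (ofPositive n) := by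
  have := ArtinMonoid.isLeftCancelMul (cliqueFree_pathGraph (n - 1))
  obtain ⟨H, _, f, hf, hΔ⟩ := exists_injective_isUnit_of_commute (commute_positiveΔ_sq (n := n))
  have isUnit_gen (i) : IsUnit (f (.gen _ i)) :=
    isUnit_map_of_dvd f (commute_positiveΔ_sq _) hΔ
      ((gen_dvd_positiveΔ i).trans (dvd_pow_self _ two_ne_zero))
  choose g hg using isUnit_gen
  let F : BraidGroup n →* Hˣ := PresentedGroup.toGroup (f := g) <| by
    rintro _ (⟨i, j, h, rfl⟩ | ⟨i, j, h, rfl⟩)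
    · simp only [map_mul, map_inv, FreeGroup.lift_apply_of]
      rw [mul_inv_eq_one, mul_inv_eq_iff_eq_mul]
      ext
      simp only [Units.val_mul, hg, ← map_mul]
      rw [ArtinMonoid.gen_comm (i := i) (j := j) (by rw [pathGraph_adj]; omega)]
    · simp only [map_mul, map_inv, FreeGroup.lift_apply_of]
      rw [mul_inv_eq_one]
      ext
      simp only [Units.val_mul, hg, ← map_mul]
      rw [ArtinMonoid.gen_braid (i := i) (j := j) (pathGraph_adj.2 (.inl h))]
  have hF : (Units.coeHom H).comp (F.comp (ofPositive n)) = f :=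
    PresentedMonoid.ext _ fun i => by
      change (F (σ i) : H) = f (.gen _ i)
      rw [← hg, σ, PresentedGroup.toGroup.of]
  refine .of_comp (f := fun b => (F b : H)) ?_
  convert hf
  exact congrArg DFunLike.coe hF

/-- The exponent sum of a braid, as a homomorphism. -/
def lengthHom (n : ℕ) : BraidGroup n →* Multiplicative ℤ :=
  PresentedGroup.toGroup (f := fun _ => .ofAdd 1) <| by
    rintro _ (⟨i, j, -, rfl⟩ | ⟨i, j, -, rfl⟩) <;> simp

/-- The exponent sum of a braid; on positive braids it is the word length. -/
def length (x : BraidGroup n) : ℤ := (lengthHom n x).toAdd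

@[simp] theorem length_mul (x y : BraidGroup n) : length (x * y) = length x + length y := by
  simp [length]

@[simp] theorem length_one : length (1 : BraidGroup n) = 0 := by simp [length]

@[simp] theorem length_σ (i : Fin (n - 1)) : length (σ i : BraidGroup n) = 1 :=
  congrArg Multiplicative.toAdd (PresentedGroup.toGroup.of _)

theorem length_ofPositive (a : PositiveMonoid n) : length (ofPositive n a) = a.length := by
  induction a using ArtinMonoid.induction_gen_mul with
  | one => simp
  | gen_mul i a ha => simp [ha]

theorem length_Δ : length (Δ n) = n.choose 2 := by
  obtain rfl | hn := Nat.eq_zero_or_pos n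
  · rfl
  have h : lengthHom n (Δ n) = .ofAdd 1 ^ (n - 1 + 1).choose 2 :=
    map_halfTwist_eq_pow (lengthHom n) fun i hi => by
      rw [σ', dif_pos hi]
      exact PresentedGroup.toGroup.of _
  rw [length, h, Nat.sub_add_cancel hn]
  simp

/-- Left divisibility: `x ≤ y` when `x⁻¹ * y` is a positive braid. -/
instance : PartialOrder (BraidGroup n) where
  le x y := IsPositive (x⁻¹ * y)
  le_refl x := by rw [inv_mul_cancel]; exact one_mem _
  le_trans x y z hxy hyz := by
    have hxz : (x⁻¹ * y) * (y⁻¹ * z) ∈ positives n := mul_mem hxy hyz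
    rwa [mul_assoc, mul_inv_cancel_left] at hxz
  le_antisymm x y hxy hyx := by
    obtain ⟨a, ha⟩ := mrange_ofPositive.ge hxy
    obtain ⟨b, hb⟩ := mrange_ofPositive.ge hyx
    have hab : ofPositive n (a * b) = ofPositive n 1 := by
      rw [map_mul, ha, hb, map_one]; group
    have hlen := congrArg ArtinMonoid.length (ofPositive_injective hab)
    rw [ArtinMonoid.length_mul, ArtinMonoid.length_one] at hlen
    rw [ArtinMonoid.eq_one_of_length_eq_zero (x := a) (by omega), map_one] at ha
    exact inv_mul_eq_one.1 ha.symm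

theorem le_def : x ≤ y ↔ IsPositive (x⁻¹ * y) := Iff.rfl

theorem isPositive_iff : IsPositive x ↔ 1 ≤ x := by rw [le_def, inv_one, one_mul]

theorem leftDvd_iff : LeftDvd x y ↔ x ≤ y :=
  ⟨fun ⟨p, hp, h⟩ => by rwa [le_def, ← h, inv_mul_cancel_left],
    fun h => ⟨x⁻¹ * y, h, mul_inv_cancel_left x y⟩⟩

instance : MulLeftMono (BraidGroup n) where
  elim x y z h := by
    change IsPositive ((x * y)⁻¹ * (x * z))
    rwa [mul_inv_rev, mul_assoc, inv_mul_cancel_left]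

theorem one_le_iff_exists_ofPositive : 1 ≤ x ↔ ∃ a, ofPositive n a = x := by
  rw [← isPositive_iff, IsPositive, ← mrange_ofPositive]
  rfl

theorem le_iff_exists_mul_ofPositive : x ≤ y ↔ ∃ a, y = x * ofPositive n a := by
  rw [le_def, isPositive_iff, one_le_iff_exists_ofPositive]
  exact exists_congr fun _ => eq_inv_mul_iff_mul_eq.trans eq_comm

theorem ofPositive_le_ofPositive {a b : PositiveMonoid n} :
    ofPositive n a ≤ ofPositive n b ↔ a ∣ b := by
  simp_rw [le_iff_exists_mul_ofPositive, ← map_mul, ofPositive_injective.eq_iff]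
  rfl

theorem length_strictMono : StrictMono (length (n := n)) := by
  intro x y h
  obtain ⟨a, rfl⟩ := le_iff_exists_mul_ofPositive.1 h.le
  have ha : a.length ≠ 0 := fun h0 =>
    h.ne (by rw [ArtinMonoid.eq_one_of_length_eq_zero h0, map_one, mul_one])
  rw [length_mul, length_ofPositive]
  omega

theorem σ_mul_Δ (i : Fin (n - 1)) : σ i * Δ n = Δ n * σ i.rev := by
  rw [← ofPositive_positiveΔ, ← ofPositive_gen, ← ofPositive_gen, ← map_mul, ← map_mul,
    gen_mul_positiveΔ]

theorem τ_σ (i : Fin (n - 1)) : τ n (σ i) = σ i.rev :=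
  Classical.epsilon_spec (p := fun f : BraidGroup n →* BraidGroup n => ∀ i, f (σ i) = σ i.rev)
    ⟨(MulAut.conj (Δ n)⁻¹).toMonoidHom, fun i => by simp [mul_assoc, σ_mul_Δ]⟩ i

theorem τ_τ (x : BraidGroup n) : τ n (τ n x) = x := by
  have : (τ n).comp (τ n) = .id _ := PresentedGroup.ext fun i => by
    change τ n (τ n (σ i)) = σ i
    rw [τ_σ, τ_σ, Fin.rev_rev]
  exact DFunLike.congr_fun this x

theorem mul_Δ (x : BraidGroup n) : x * Δ n = Δ n * τ n x := by
  have : τ n = (MulAut.conj (Δ n)⁻¹).toMonoidHom := PresentedGroup.ext fun i => by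
    change τ n (σ i) = (Δ n)⁻¹ * σ i * (Δ n)⁻¹⁻¹
    rw [τ_σ, inv_inv, mul_assoc, σ_mul_Δ, inv_mul_cancel_left]
  rw [this]
  simp [mul_assoc]

theorem Δ_mul (x : BraidGroup n) : Δ n * x = τ n x * Δ n := by
  rw [mul_Δ, τ_τ]

theorem commute_Δ_sq (x : BraidGroup n) : Commute (Δ n ^ 2) x := by
  rw [Commute, SemiconjBy, sq, mul_assoc, ← mul_assoc x, mul_Δ x, mul_assoc, mul_Δ, τ_τ]

theorem Δ_zpow_mul (u : ℤ) (x : BraidGroup n) : Δ n ^ u * x = τpow u x * Δ n ^ u := by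
  have even (k : ℤ) (y : BraidGroup n) : Commute (Δ n ^ (2 * k)) y := by
    rw [zpow_mul]
    exact (commute_Δ_sq y).zpow_left k
  rw [τpow]
  split_ifs with hu
  · obtain ⟨k, rfl⟩ := even_iff_exists_two_mul.1 hu
    exact even k x
  · obtain ⟨k, rfl⟩ := Int.not_even_iff_odd.1 hu
    rw [zpow_add_one, mul_assoc, Δ_mul, ← mul_assoc, even, mul_assoc]

theorem τpow_injective (u : ℤ) : Function.Injective (τpow (n := n) u) := fun x y h => by
  have hxy : Δ n ^ u * x = Δ n ^ u * y := by rw [Δ_zpow_mul, h, Δ_zpow_mul]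
  exact mul_left_cancel hxy

theorem monotone_τ : Monotone (τ n) := fun x y h => by
  have : positives n ≤ (positives n).comap (τ n) := Submonoid.closure_le.2 <| by
    rintro _ ⟨i, rfl⟩
    change τ n (σ i) ∈ positives n
    exact τ_σ i ▸ Submonoid.subset_closure ⟨_, rfl⟩
  rw [le_def, ← map_inv, ← map_mul]
  exact this h

theorem mul_Δ_le_mul_Δ_iff : x * Δ n ≤ y * Δ n ↔ x ≤ y := by
  rw [mul_Δ, mul_Δ, mul_le_mul_iff_left]
  exact ⟨fun h => by simpa only [τ_τ] using monotone_τ h, fun h => monotone_τ h⟩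

theorem one_le_σ (i : Fin (n - 1)) : (1 : BraidGroup n) ≤ σ i :=
  isPositive_iff.1 (Submonoid.subset_closure ⟨i, rfl⟩)

theorem σ_le_Δ (i : Fin (n - 1)) : σ i ≤ Δ n := by
  rw [← ofPositive_positiveΔ, ← ofPositive_gen, ofPositive_le_ofPositive]
  exact gen_dvd_positiveΔ i

theorem one_le_Δ : 1 ≤ Δ n :=
  one_le_iff_exists_ofPositive.2 ⟨_, ofPositive_positiveΔ⟩

theorem exists_Δ_zpow_le (x : BraidGroup n) : ∃ k : ℤ, Δ n ^ k ≤ x := by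
  have hx : x ∈ Subgroup.closure (Set.range (σ (n := n))) :=
    PresentedGroup.closure_range_of _ ▸ Subgroup.mem_top x
  induction hx using Subgroup.closure_induction_right with
  | one => exact ⟨0, (zpow_zero _).le⟩
  | mul_right x _ y hy ih =>
    obtain ⟨i, rfl⟩ := hy
    exact ih.imp fun k hk => hk.trans (le_mul_of_one_le_right' (one_le_σ i))
  | mul_inv_cancel x _ y hy ih =>
    obtain ⟨i, rfl⟩ := hy
    obtain ⟨k, hk⟩ := ih
    refine ⟨k - 1, mul_Δ_le_mul_Δ_iff.1 ?_⟩
    rw [← zpow_add_one, sub_add_cancel, mul_assoc]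
    have h : 1 ≤ (σ i)⁻¹ * Δ n := le_inv_mul_iff_mul_le.2 ((mul_one _).trans_le (σ_le_Δ i))
    exact hk.trans (le_mul_of_one_le_right' h)

theorem exists_le_and_le (x y : BraidGroup n) : ∃ w, w ≤ x ∧ w ≤ y := by
  obtain ⟨k, hk⟩ := exists_Δ_zpow_le x
  obtain ⟨l, hl⟩ := exists_Δ_zpow_le y
  exact ⟨Δ n ^ min k l, (monotone_zpow_of_one_le one_le_Δ (min_le_left k l)).trans hk,
    (monotone_zpow_of_one_le one_le_Δ (min_le_right k l)).trans hl⟩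

theorem exists_le_iff_of_le (hx : x ≤ z) (hy : y ≤ z) : ∃ l, ∀ c, l ≤ c ↔ x ≤ c ∧ y ≤ c := by
  obtain ⟨w, hwx, hwy⟩ := exists_le_and_le x y
  obtain ⟨c, rfl⟩ := le_iff_exists_mul_ofPositive.1 (hwx.trans hx)
  obtain ⟨a, rfl⟩ := le_iff_exists_mul_ofPositive.1 hwx
  obtain ⟨b, rfl⟩ := le_iff_exists_mul_ofPositive.1 hwy
  rw [mul_le_mul_iff_left, ofPositive_le_ofPositive] at hx hy
  obtain ⟨l, hl⟩ := ArtinMonoid.exists_dvd_iff_of_dvd (cliqueFree_pathGraph (n - 1)) hx hy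
  have hl' (d) : w * ofPositive n l ≤ w * ofPositive n d ↔
      w * ofPositive n a ≤ w * ofPositive n d ∧ w * ofPositive n b ≤ w * ofPositive n d := by
    simp only [mul_le_mul_iff_left, ofPositive_le_ofPositive, hl]
  refine ⟨w * ofPositive n l, fun c => ⟨fun h => ?_, fun h => ?_⟩⟩
  · exact ⟨((hl' l).1 le_rfl).1.trans h, ((hl' l).1 le_rfl).2.trans h⟩
  · obtain ⟨d, rfl⟩ := le_iff_exists_mul_ofPositive.1 (hwx.trans h.1)
    exact (hl' d).2 h

theorem exists_forall_le_iff (x y : BraidGroup n) : ∃ g, ∀ c, c ≤ g ↔ c ≤ x ∧ c ≤ y := by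
  obtain ⟨w, hx, hy⟩ := exists_le_and_le x y
  exact exists_le_iff_of_strictMono length_strictMono (fun _ _ _ => exists_le_iff_of_le) hx hy

noncomputable instance : SemilatticeInf (BraidGroup n) where
  inf x y := (exists_forall_le_iff x y).choose
  inf_le_left x y := (((exists_forall_le_iff x y).choose_spec _).1 le_rfl).1
  inf_le_right x y := (((exists_forall_le_iff x y).choose_spec _).1 le_rfl).2
  le_inf x y z hy hz := ((exists_forall_le_iff y z).choose_spec x).2 ⟨hy, hz⟩

theorem isGarside (hn : 2 ≤ n) : IsGarside (Δ n) length where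
  len_mul := length_mul
  len_strictMono := length_strictMono
  one_lt := one_le_Δ.lt_of_ne fun h => by
    have hΔ := length_Δ (n := n)
    have := Nat.choose_pos hn
    rw [← h, length_one] at hΔ
    omega
  mul_le_mul_iff _ _ := mul_Δ_le_mul_Δ_iff
  exists_zpow_le := exists_Δ_zpow_le

theorem eq_of_le_of_forall_not_mul_σ_le (h : x ≤ y) (hσ : ∀ i, ¬ x * σ i ≤ y) : x = y := by
  obtain ⟨a, rfl⟩ := le_iff_exists_mul_ofPositive.1 h
  obtain rfl | ⟨i, b, rfl⟩ := ArtinMonoid.eq_one_or_exists_gen_mul a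
  · rw [map_one, mul_one]
  · rw [map_mul, ofPositive_gen, ← mul_assoc] at hσ
    exact (hσ i (le_iff_exists_mul_ofPositive.2 ⟨b, rfl⟩)).elim

theorem isLeftWeighted_iff (hx : x ≤ Δ n) (hy : 1 ≤ y) :
    IsLeftWeighted x y ↔ Δ n ⊓ x * y = x := by
  have hlw : IsLeftWeighted x y ↔ ∀ i, ¬ x * σ i ≤ Δ n ⊓ x * y :=
    forall_congr' fun i => by
      rw [leftDvd_iff, leftDvd_iff, le_inf_iff, le_inv_mul_iff_mul_le, mul_le_mul_iff_left]
  rw [hlw]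
  refine ⟨fun h => ?_, fun h i hi => ?_⟩
  · exact (eq_of_le_of_forall_not_mul_σ_le (le_inf hx (le_mul_of_one_le_right' hy)) h).symm
  · have := length_strictMono.monotone (h ▸ hi)
    rw [length_mul, length_σ] at this
    omega

theorem Δ_le_mul_Δ (hx : 1 ≤ x) : Δ n ≤ x * Δ n := by
  simpa only [one_mul] using mul_Δ_le_mul_Δ_iff.2 hx

theorem Δ_inf_mul_Δ_inf (hx : 1 ≤ x) (y : BraidGroup n) :
    Δ n ⊓ x * (Δ n ⊓ y) = Δ n ⊓ x * y := by
  have hinf : x * (Δ n ⊓ y) = x * Δ n ⊓ x * y := (OrderIso.mulLeft x).map_inf _ _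
  rw [hinf, ← inf_assoc, inf_eq_left.2 (Δ_le_mul_Δ hx)]

theorem one_le_prod {L : List (BraidGroup n)} (hL : ∀ a ∈ L, IsPermBraid a) : 1 ≤ L.prod :=
  List.one_le_prod_of_one_le fun a ha => isPositive_iff.1 (hL a ha).1

theorem head_eq_Δ_inf_prod {L : List (BraidGroup n)} (hL : ∀ a ∈ L, IsPermBraid a)
    (hchain : L.IsChain IsLeftWeighted) : L.head?.getD 1 = Δ n ⊓ L.prod := by
  induction L with
  | nil => exact (inf_eq_right.2 one_le_Δ).symm
  | cons a L ih =>
    rw [List.forall_mem_cons] at hL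
    obtain ⟨haL, hchain⟩ := List.isChain_cons.1 hchain
    have ha : a ≤ Δ n := leftDvd_iff.1 hL.1.2
    rw [List.head?_cons, Option.getD_some, List.prod_cons,
      ← Δ_inf_mul_Δ_inf (isPositive_iff.1 hL.1.1), ← ih hL.2 hchain]
    cases L with
    | nil => simpa using ha
    | cons b L =>
      have hb : 1 ≤ b := isPositive_iff.1 (hL.2 b List.mem_cons_self).1
      exact ((isLeftWeighted_iff ha hb).1 (haL b rfl)).symm

theorem isChain_cons_isLeftWeighted {L : List (BraidGroup n)} (hL : ∀ a ∈ L, IsPermBraid a)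
    (hchain : L.IsChain IsLeftWeighted) (hx : 1 ≤ x) (h : Δ n ⊓ x * L.prod = x) :
    (x :: L).IsChain IsLeftWeighted := by
  refine List.isChain_cons.2 ⟨fun b hb => ?_, hchain⟩
  have hhead := head_eq_Δ_inf_prod hL hchain
  rw [hb, Option.getD_some] at hhead
  rw [isLeftWeighted_iff (h.ge.trans inf_le_left)
    (isPositive_iff.1 (hL b (List.mem_of_mem_head? hb)).1), hhead, Δ_inf_mul_Δ_inf hx, h]

theorem one_lt_Δ_inf (hx : 1 < x) : 1 < Δ n ⊓ x := by
  refine (le_inf one_le_Δ hx.le).lt_of_ne fun h => hx.ne ?_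
  refine eq_of_le_of_forall_not_mul_σ_le hx.le fun i hi => ?_
  rw [one_mul] at hi
  have hlen := length_strictMono.monotone (h ▸ le_inf (σ_le_Δ i) hi)
  rw [length_σ, length_one] at hlen
  omega

theorem exists_isWeightedForm_zpow_mul (hx : 1 ≤ x) (hΔ : ¬ Δ n ≤ x) (u : ℤ) :
    ∃ L, IsWeightedForm u L (Δ n ^ u * x) := by
  induction hm : (length x).toNat using Nat.strong_induction_on generalizing x with | _ m ih
  obtain rfl | hx1 := hx.eq_or_lt
  · exact ⟨[], by simp, .nil, rfl⟩
  set a := Δ n ⊓ x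
  have ha1 : 1 < a := one_lt_Δ_inf hx1
  have hax : a * (a⁻¹ * x) = x := mul_inv_cancel_left a x
  have hq : 1 ≤ a⁻¹ * x := le_inv_mul_iff_mul_le.2 ((mul_one a).trans_le inf_le_right)
  have hqΔ : ¬ Δ n ≤ a⁻¹ * x := fun h =>
    hΔ ((Δ_le_mul_Δ ha1.le).trans (le_inv_mul_iff_mul_le.1 h))
  have hlen : (length (a⁻¹ * x)).toNat < m := by
    have hlen1 := length_strictMono ha1
    have hlenx := length_strictMono hx1
    have hsum := congrArg length hax
    rw [length_mul] at hsum
    rw [length_one] at hlen1 hlenx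
    omega
  obtain ⟨L, hL, hchain, hprod⟩ := ih _ hlen hq hqΔ rfl
  rw [mul_right_inj] at hprod
  rw [hprod] at hax
  refine ⟨a :: L, List.forall_mem_cons.2 ⟨⟨⟨?_, ?_⟩, ha1.ne', ?_⟩, hL⟩, ?_, ?_⟩
  · exact isPositive_iff.2 ha1.le
  · exact leftDvd_iff.2 inf_le_left
  · exact fun h => hΔ (inf_eq_left.1 h)
  · exact isChain_cons_isLeftWeighted (fun b hb => (hL b hb).1) hchain ha1.le (by rw [hax])
  · rw [List.prod_cons, hax]

theorem IsWeightedForm.head_eq {u : ℤ} {L : List (BraidGroup n)} (h : IsWeightedForm u L x) :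
    L.head?.getD 1 = Δ n ⊓ Δ n ^ (-u) * x := by
  obtain ⟨hL, hchain, rfl⟩ := h
  rw [head_eq_Δ_inf_prod (fun a ha => (hL a ha).1) hchain, zpow_neg, inv_mul_cancel_left]

theorem isWeightedForm_wf (hn : 2 ≤ n) (x : BraidGroup n) :
    IsWeightedForm (binf x) (wf x).2 x := by
  obtain ⟨u, hu, hmax⟩ := Int.exists_greatest_of_bdd (P := fun k => Δ n ^ k ≤ x)
    ⟨_, fun _ => (isGarside hn).le_of_zpow_le⟩ (exists_Δ_zpow_le x)
  have hux : Δ n ^ u * (Δ n ^ (-u) * x) = x := by rw [zpow_neg, mul_inv_cancel_left]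
  have hle : 1 ≤ Δ n ^ (-u) * x := by
    rwa [← mul_le_mul_iff_left (Δ n ^ u), hux, mul_one]
  have hnle : ¬ Δ n ≤ Δ n ^ (-u) * x := fun h => by
    rw [← mul_le_mul_iff_left (Δ n ^ u), hux, ← zpow_add_one] at h
    exact (hmax _ h).not_gt (lt_add_one u)
  obtain ⟨L, hL⟩ := exists_isWeightedForm_zpow_mul hle hnle u
  exact Classical.epsilon_spec (p := fun p : ℤ × List (BraidGroup n) => IsWeightedForm p.1 p.2 x)
    ⟨(u, L), hux ▸ hL⟩

theorem bhead_eq (hn : 2 ≤ n) (x : BraidGroup n) : bhead x = Δ n ⊓ Δ n ^ (-binf x) * x :=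
  (isWeightedForm_wf hn x).head_eq

theorem bhead_ne_Δ (hn : 2 ≤ n) (x : BraidGroup n) : bhead x ≠ Δ n := by
  have hL := (isWeightedForm_wf hn x).1
  rw [bhead]
  cases hw : (wf x).2 with
  | nil => exact (isGarside hn).one_lt.ne
  | cons a L => exact (hL a (hw ▸ List.mem_cons_self)).2.2

theorem Δ_zpow_le_iff (hn : 2 ≤ n) {k : ℤ} : Δ n ^ k ≤ x ↔ k ≤ binf x := by
  have hmono := monotone_zpow_of_one_le (one_le_Δ (n := n))
  refine ⟨fun h => ?_, fun h => (hmono h).trans ?_⟩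
  · by_contra! hlt
    refine bhead_ne_Δ hn x ((bhead_eq hn x).trans (inf_eq_left.2 ?_))
    rw [zpow_neg, le_inv_mul_iff_mul_le, ← zpow_add_one]
    exact (hmono (Int.add_one_le_of_lt hlt)).trans h
  · obtain ⟨hL, -, hx⟩ := isWeightedForm_wf hn x
    exact (le_mul_of_one_le_right' (one_le_prod fun a ha => (hL a ha).1)).trans_eq hx.symm

theorem binf_eq_iff (hn : 2 ≤ n) {u : ℤ} :
    binf x = u ↔ Δ n ^ u ≤ x ∧ ¬ Δ n ^ (u + 1) ≤ x := by
  rw [Δ_zpow_le_iff hn, Δ_zpow_le_iff hn]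
  omega

theorem τpow_bhead (hn : 2 ≤ n) (x : BraidGroup n) :
    τpow (binf x) (bhead x) = Δ n ⊓ (isGarside hn).twist x (binf x) 1 := by
  set u := binf x with hu
  have hΔ : (isGarside hn).twist (Δ n ^ u) u (Δ n) = Δ n := by
    rw [IsGarside.twist_apply, ← zpow_add_one, add_comm, zpow_one_add, zpow_neg,
      mul_inv_cancel_right]
  have hx : (isGarside hn).twist (Δ n ^ u) u (Δ n ^ (-u) * x) = (isGarside hn).twist x u 1 := by
    rw [IsGarside.twist_apply, IsGarside.twist_apply, zpow_neg, mul_inv_cancel_left, mul_one]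
  calc τpow u (bhead x) = (isGarside hn).twist (Δ n ^ u) u (bhead x) := by
        rw [IsGarside.twist_apply, Δ_zpow_mul, zpow_neg, mul_inv_cancel_right]
    _ = Δ n ⊓ (isGarside hn).twist x u 1 := by rw [bhead_eq hn, ← hu, map_inf, hΔ, hx]

theorem isWCW_of_inf_twist_eq (hn : 2 ≤ n)
    (h : Δ n ⊓ (isGarside hn).twist x (binf x) (Δ n ⊓ (isGarside hn).twist x (binf x) 1) =
      Δ n ⊓ (isGarside hn).twist x (binf x) 1) : IsWCW x := by
  set u := binf x with hu
  set s := Δ n ⊓ (isGarside hn).twist x u 1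
  have hs : τpow u (bhead x) = s := τpow_bhead hn x
  obtain ⟨hle, hnle⟩ := (binf_eq_iff hn).1 hu.symm
  have hone : 1 ≤ s :=
    le_inf one_le_Δ ((isGarside hn).le_twist_iff.2 (by rwa [one_mul, mul_one]))
  have hbinf : binf (x * s) = u := by
    refine (binf_eq_iff hn).2 ⟨hle.trans (le_mul_of_one_le_right' hone), fun hlt => hnle ?_⟩
    rw [add_comm, zpow_one_add, ← (isGarside hn).le_twist_iff] at hlt
    have hΔ : Δ n ≤ (isGarside hn).twist x u 1 :=
      (inf_eq_left.2 hlt ▸ h : Δ n = s).trans_le inf_le_right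
    rwa [add_comm, zpow_one_add, ← mul_one x, ← (isGarside hn).le_twist_iff]
  rw [IsWCW, hs]
  refine τpow_injective u ?_
  calc τpow u (bhead (x * s)) = Δ n ⊓ (isGarside hn).twist (x * s) u 1 := hbinf ▸ τpow_bhead hn _
    _ = Δ n ⊓ (isGarside hn).twist x u s := by simp only [IsGarside.twist_apply, mul_one]
    _ = τpow u (bhead x) := h.trans hs.symm

theorem IsPseudoAnosov.two_le (h : IsPseudoAnosov x) : 2 ≤ n := by
  by_contra! hn
  have hempty : IsEmpty (Fin (n - 1)) := by
    rw [Nat.sub_eq_zero_of_le (by omega)]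
    infer_instance
  obtain ⟨w, rfl⟩ := PresentedGroup.mk_surjective _ x
  exact h.1 ⟨1, one_pos, 0, by rw [Subsingleton.elim w 1, map_one, one_pow, mul_zero, zpow_zero]⟩

theorem pA_wcw_power_general (n : ℕ) (hn : 2 ≤ n) (x : BraidGroup n) :
    ∃ y : BraidGroup n, IsConj x y ∧
      ∃ M : ℕ, 1 ≤ M ∧ M ≤ (n * (n - 1) / 2) ^ 2 ∧ IsWCW (y ^ M) := by
  obtain ⟨y, hxy, M, hM, hMD, u, hu, hu', hstab⟩ :=
    (isGarside hn).exists_isConj_pow_inf_twist_eq length_Δ x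
  obtain rfl := (binf_eq_iff hn).2 ⟨hu, hu'⟩
  exact ⟨y, hxy, M, hM, Nat.choose_two_right n ▸ hMD, isWCW_of_inf_twist_eq hn hstab⟩

end BraidGroup

namespace BraidGroup

/-- every pseudo-Anosov braid has a conjugate `y` and an exponent
`1 ≤ M ≤ D³`, `D = n(n-1)/2`, with `y^M` weakly cyclically weighted. -/
theorem pA_wcw_power (n : ℕ) (x : BraidGroup n) (h : IsPseudoAnosov x) :
    ∃ y : BraidGroup n, IsConj x y ∧
      ∃ M : ℕ, 1 ≤ M ∧ M ≤ (n * (n - 1) / 2) ^ 3 ∧ IsWCW (y ^ M) := by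
  obtain ⟨y, hxy, M, hM, hMD, hwcw⟩ := pA_wcw_power_general n h.two_le x
  have hD : 0 < n * (n - 1) / 2 := Nat.choose_two_right n ▸ Nat.choose_pos h.two_le
  exact ⟨y, hxy, M, hM, hMD.trans (Nat.pow_le_pow_right hD (by norm_num)), hwcw⟩

end BraidGroup
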